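/- arXiv:math/9807102 — 4 statements merged into one kernel-verified Lean document; each statement's English description precedes it below -/
import Mathlib

section
/- Suppose g : ℕ → ℂ is multiplicative and satisfies Condition (A) for some κ = ξ + iη with η² < 2ξ + 1, satisfies Condition (B), and satisfies Condition (C) with some β < ξ + 1. Then the asymptotic formula M_g(x,q) = c_q(g)·log^κ x + O_g(δ(q)·(log x)^{β−1}) holds uniformly for all x ≥ 2 and all nonzero integers q, where c_q(g) = Γ(κ+1)^{−1} (φ(q)/q)^κ ∏_{p ∤ q} (1 − 1/p)^κ (1 + g(p)/p + g(p²)/p² + ⋯), φ is Euler's totient function, and δ(q) = 1 + ∑_{p | q} |g(p)| log p / p. -/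
open Filter Finset
open scoped ENNReal NNReal

/-- `g` is multiplicative: `g 1 = 1` and `g (m*n) = g m * g n` for coprime `m, n`. -/
def IsMult (g : ℕ → ℂ) : Prop :=
  g 1 = 1 ∧ ∀ m n : ℕ, Nat.Coprime m n → g (m * n) = g m * g n

/-- `M_g(x) = ∑_{n ≤ x} g(n)/n`. -/
noncomputable def Mg (g : ℕ → ℂ) (x : ℝ) : ℂ :=
  ∑ n ∈ Finset.Icc 1 ⌊x⌋₊, g n / (n : ℂ)

/-- The finite set of primes `p ≤ x`. -/
noncomputable def primesLE (x : ℝ) : Finset ℕ :=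
  (Finset.range (⌊x⌋₊ + 1)).filter Nat.Prime

/-- Condition (A): `∑_{p ≤ x} g(p) log p / p = κ log x + O(1)` for all `x ≥ 2`. -/
def CondA (g : ℕ → ℂ) (κ : ℂ) : Prop :=
  ∃ C : ℝ, ∀ x : ℝ, 2 ≤ x →
    ‖(∑ p ∈ primesLE x, g p * (Real.log p : ℂ) / (p : ℂ)) - κ * (Real.log x : ℂ)‖ ≤ C

/-- Condition (B):
`∑_p (|g(p)| log p / p) ∑_{r≥1} |g(p^r)|/p^r + ∑_p ∑_{r≥2} |g(p^r)| log(p^r)/p^r < ∞`. -/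
def CondB (g : ℕ → ℂ) : Prop :=
  (∑' p : Nat.Primes,
      ((‖g (p : ℕ)‖₊ : ℝ≥0∞) * ENNReal.ofReal (Real.log (p : ℕ)) / ((p : ℕ) : ℝ≥0∞)) *
        ∑' r : ℕ, (‖g ((p : ℕ) ^ (r + 1))‖₊ : ℝ≥0∞) / (((p : ℕ) ^ (r + 1) : ℕ) : ℝ≥0∞))
    + (∑' p : Nat.Primes, ∑' r : ℕ,
        (‖g ((p : ℕ) ^ (r + 2))‖₊ : ℝ≥0∞) *
          ENNReal.ofReal (Real.log ((p : ℕ) ^ (r + 2) : ℕ)) /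
          (((p : ℕ) ^ (r + 2) : ℕ) : ℝ≥0∞)) < ⊤

/-- Condition (C): `∏_{p ≤ x} (1 + |g(p)|/p) ≪ (log x)^β` for all `x ≥ 2`. -/
def CondC (g : ℕ → ℂ) (β : ℝ) : Prop :=
  ∃ C : ℝ, ∀ x : ℝ, 2 ≤ x →
    ∏ p ∈ primesLE x, (1 + ‖g p‖ / (p : ℝ)) ≤ C * Real.log x ^ β

/-- The Euler factor `(1 - 1/p)^κ (1 + g(p)/p + g(p²)/p² + ⋯)` (principal branch power). -/
noncomputable def eulerFactor (g : ℕ → ℂ) (κ : ℂ) (p : ℕ) : ℂ :=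
  (1 - 1 / (p : ℂ)) ^ κ * ∑' r : ℕ, g (p ^ r) / (p : ℂ) ^ r

/-- `M_g(x,q) = ∑_{n ≤ x, (n,q)=1} g(n)/n`. -/
noncomputable def Mgq (g : ℕ → ℂ) (x : ℝ) (q : ℤ) : ℂ :=
  ∑ n ∈ (Finset.Icc 1 ⌊x⌋₊).filter (fun n => Nat.Coprime n q.natAbs), g n / (n : ℂ)

/-- `δ(q) = 1 + ∑_{p ∣ q} |g(p)| log p / p`. -/
noncomputable def deltaq (g : ℕ → ℂ) (q : ℤ) : ℝ :=
  1 + ∑ p ∈ q.natAbs.primeFactors, ‖g p‖ * Real.log p / (p : ℝ)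

structure FHyp (κ : ℂ) (β K D : ℝ) (f : ℕ → ℂ) : Prop where
  zero : f 0 = 0
  one : f 1 = 1
  mul : ∀ {m n : ℕ}, Nat.Coprime m n → f (m * n) = f m * f n
  A : ∀ x : ℝ, 2 ≤ x →
    ‖(∑ p ∈ primesLE x, f p * (Real.log p : ℂ)) - κ * (Real.log x : ℂ)‖ ≤ D
  B1 : ∀ (S : Finset ℕ) (R : ℕ), (∀ p ∈ S, p.Prime) →
    ∑ p ∈ S, ∑ r ∈ range R, ‖f p‖ * Real.log p * ‖f (p ^ (r + 1))‖ ≤ K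
  B2 : ∀ (S : Finset ℕ) (R : ℕ), (∀ p ∈ S, p.Prime) →
    ∑ p ∈ S, ∑ r ∈ range R, ‖f (p ^ (r + 2))‖ * (((r : ℝ) + 2) * Real.log p) ≤ K
  C : ∀ x : ℝ, 2 ≤ x → ∏ p ∈ primesLE x, (1 + ‖f p‖) ≤ K * Real.log x ^ β
  K0 : 0 ≤ K
  D1 : 1 ≤ D

lemma split_p {p N : ℕ} (hp : p.Prime) {α : Type*} [AddCommMonoid α] (Φ : ℕ → ℕ → α) :
    ∑ n ∈ Icc 1 N, Φ (n.factorization p) (n / p ^ n.factorization p) =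
    ∑ m ∈ (Icc 1 N).filter (fun m => ¬ p ∣ m),
      ∑ r ∈ (range (N + 1)).filter (fun r => p ^ r * m ≤ N), Φ r m := by
  rw [Finset.sum_sigma']
  refine Finset.sum_bij' (fun n _ => ⟨n / p ^ n.factorization p, n.factorization p⟩)
    (fun x _ => p ^ x.2 * x.1) ?_ ?_ ?_ ?_ ?_
  · intro n hn
    simp only [mem_Icc] at hn
    have hn0 : n ≠ 0 := by omega
    have h1 : p ^ n.factorization p * (n / p ^ n.factorization p) = n := Nat.ordProj_mul_ordCompl_eq_self n p
    have h2 : 0 < n / p ^ n.factorization p := Nat.ordCompl_pos p hn0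
    have h3 : n / p ^ n.factorization p ≤ n := Nat.div_le_self _ _
    have h4 : n.factorization p < n := Nat.factorization_lt p hn0
    simp only [mem_sigma, mem_filter, mem_Icc, mem_range]
    exact ⟨⟨⟨h2, h3.trans hn.2⟩, Nat.not_dvd_ordCompl hp hn0⟩, by omega, by rw [h1]; exact hn.2⟩
  · rintro ⟨m, r⟩ hx
    simp only [mem_sigma, mem_filter, mem_Icc, mem_range] at hx ⊢
    exact ⟨Nat.mul_pos (pow_pos hp.pos _) hx.1.1.1, hx.2.2⟩
  · intro n hn
    exact Nat.ordProj_mul_ordCompl_eq_self n p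
  · rintro ⟨m, r⟩ hx
    simp only [mem_sigma, mem_filter, mem_Icc, mem_range] at hx ⊢
    have h1 : (p ^ r * m).factorization p = r := by
      rw [Nat.factorization_mul (pow_pos hp.pos _).ne' (by omega), hp.factorization_pow]
      simp [Nat.factorization_eq_zero_of_not_dvd hx.1.2]
    rw [h1, Nat.mul_div_cancel_left _ (pow_pos hp.pos _)]
  · intro n hn; rfl

lemma one_lt_two_log {p : ℕ} (hp : p.Prime) : 1 ≤ 2 * Real.log p := by
  have h1 : Real.log 2 ≤ Real.log p := Real.log_le_log (by norm_num) (by exact_mod_cast hp.two_le)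
  have := Real.log_two_gt_d9
  linarith

namespace FHyp
variable {κ : ℂ} {β K D : ℝ} {f : ℕ → ℂ}

lemma tail_le (H : FHyp κ β K D f) (S : Finset ℕ) (R : ℕ) (hS : ∀ p ∈ S, p.Prime) :
    ∑ p ∈ S, ∑ r ∈ range R, ‖f (p ^ (r + 2))‖ ≤ K := by
  refine le_trans (sum_le_sum fun p hp => sum_le_sum fun r _ => ?_) (H.B2 S R hS)
  have := one_lt_two_log (hS p hp)
  refine le_mul_of_one_le_right (norm_nonneg _) ?_
  have h2 : 0 ≤ (r:ℝ) * Real.log p := by positivity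
  linarith

lemma summable_tail (H : FHyp κ β K D f) {p : ℕ} (hp : p.Prime) :
    Summable fun r => ‖f (p ^ (r + 2))‖ := by
  refine summable_of_sum_range_le (c := K) (fun _ => norm_nonneg _) fun R => ?_
  simpa using H.tail_le {p} R (by simpa using hp)

lemma summable_pow (H : FHyp κ β K D f) {p : ℕ} (hp : p.Prime) :
    Summable fun r => ‖f (p ^ r)‖ := by
  rw [← summable_nat_add_iff 2]; exact H.summable_tail hp

/-- tail of Euler factor -/
noncomputable def tail (f : ℕ → ℂ) (p : ℕ) : ℝ := ∑' r, ‖f (p ^ (r + 2))‖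

lemma tail_nonneg (p : ℕ) : 0 ≤ tail f p := tsum_nonneg fun _ => norm_nonneg _

lemma sum_tail_le (H : FHyp κ β K D f) (S : Finset ℕ) (hS : ∀ p ∈ S, p.Prime) :
    ∑ p ∈ S, tail f p ≤ K := by
  have h : Tendsto (fun R => ∑ p ∈ S, ∑ r ∈ range R, ‖f (p ^ (r + 2))‖) atTop
      (nhds (∑ p ∈ S, tail f p)) :=
    tendsto_finsetSum _ fun p hp => (H.summable_tail (hS p hp)).hasSum.tendsto_sum_nat
  exact le_of_tendsto' h fun R => H.tail_le S R hS

lemma tsum_pow (H : FHyp κ β K D f) {p : ℕ} (hp : p.Prime) :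
    ∑' r, ‖f (p ^ r)‖ = 1 + ‖f p‖ + tail f p := by
  rw [← (H.summable_pow hp).sum_add_tsum_nat_add 2]
  simp [sum_range_succ, H.one, tail]

lemma absSum_le (H : FHyp κ β K D f) {x : ℝ} (hx : 2 ≤ x) :
    ∑ n ∈ Icc 1 ⌊x⌋₊, ‖f n‖ ≤ K * Real.exp K * Real.log x ^ β := by
  set N := ⌊x⌋₊
  have key := EulerProduct.summable_and_hasSum_smoothNumbers_prod_primesBelow_tsum
    (f := fun n => ‖f n‖) (by simp [H.one]) (fun {m n} h => by rw [H.mul h, norm_mul])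
    (fun hp => by simpa using H.summable_pow hp) (N + 1)
  have h1 : ∑ n ∈ Icc 1 N, ‖f n‖ ≤ ∏ p ∈ (N + 1).primesBelow, ∑' r : ℕ, ‖f (p ^ r)‖ := by
    have hmem : ∀ n ∈ Icc 1 N, n ∈ (N + 1).smoothNumbers := fun n hn => by
      simp only [mem_Icc] at hn
      exact Nat.mem_smoothNumbers_of_lt (by omega) (by omega)
    have := sum_le_hasSum ((Icc 1 N).attach.map ⟨fun n => (⟨n.1, hmem n.1 n.2⟩ : (N+1).smoothNumbers),
      fun a b h => Subtype.ext (congrArg (fun z : (N+1).smoothNumbers => z.1) h)⟩) (fun _ _ => norm_nonneg _) key.2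
    rw [sum_map] at this
    rw [← sum_attach (Icc 1 N) (fun n => ‖f n‖)]
    exact this
  have hP : primesLE x = (N + 1).primesBelow := rfl
  refine h1.trans ?_
  have hpr : ∀ p ∈ (N+1).primesBelow, p.Prime := fun p hp => Nat.prime_of_mem_primesBelow hp
  calc ∏ p ∈ (N + 1).primesBelow, ∑' r : ℕ, ‖f (p ^ r)‖
      ≤ ∏ p ∈ (N + 1).primesBelow, ((1 + ‖f p‖) * Real.exp (tail f p)) := by
        refine prod_le_prod (fun p _ => tsum_nonneg fun _ => norm_nonneg _) fun p hp => ?_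
        rw [H.tsum_pow (hpr p hp)]
        have h2 := Real.add_one_le_exp (tail f p)
        have h3 := tail_nonneg (f := f) p
        have h4 := norm_nonneg (f p)
        nlinarith
    _ = (∏ p ∈ (N + 1).primesBelow, (1 + ‖f p‖)) * Real.exp (∑ p ∈ (N + 1).primesBelow, tail f p) := by
        rw [prod_mul_distrib, Real.exp_sum]
    _ ≤ (K * Real.log x ^ β) * Real.exp K := by
        have h0 : 0 ≤ Real.log x := Real.log_nonneg (by linarith)
        have := H.K0
        gcongr
        · rw [← hP]; exact H.C x hx
        · exact H.sum_tail_le _ hpr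
    _ = _ := by ring

end FHyp

namespace FHyp
variable {κ : ℂ} {β K D : ℝ} {f : ℕ → ℂ}

lemma log_eq_sum {n N : ℕ} (h1 : 1 ≤ n) (hN : n ≤ N) :
    Real.log n = ∑ p ∈ (N + 1).primesBelow, (n.factorization p : ℝ) * Real.log p := by
  have hn : n ≠ 0 := by omega
  rw [Real.log_nat_eq_sum_factorization, Finsupp.sum]
  refine sum_subset ?_ ?_
  · intro p hp
    have hp' := Nat.support_factorization n ▸ hp
    rw [Nat.mem_primesBelow]
    exact ⟨by have := Nat.le_of_mem_primeFactors hp'; omega, Nat.prime_of_mem_primeFactors hp'⟩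
  · intro p _ hp
    rw [Finsupp.notMem_support_iff.mp hp]; simp

/-- contribution of a single prime -/
lemma single (H : FHyp κ β K D f) {p N : ℕ} (hp : p.Prime) :
    ‖∑ n ∈ Icc 1 N, f n * ((n.factorization p : ℂ) * (Real.log p : ℂ))
      - ∑ m ∈ (Icc 1 N).filter (fun m => p * m ≤ N), f m * (f p * (Real.log p : ℂ))‖
    ≤ (∑ r ∈ range N, ‖f p‖ * Real.log p * ‖f (p ^ (r + 1))‖
      + ∑ r ∈ range N, ‖f (p ^ (r + 2))‖ * (((r : ℝ) + 2) * Real.log p)) *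
        ∑ n ∈ Icc 1 N, ‖f n‖ := by
  have hlog : 0 ≤ Real.log p := Real.log_natCast_nonneg p
  have cop : ∀ {m r : ℕ}, ¬ p ∣ m → Nat.Coprime (p ^ r) m := fun {m r} h =>
    Nat.Coprime.pow_left r ((Nat.Prime.coprime_iff_not_dvd hp).2 h)
  have e1 : ∑ n ∈ Icc 1 N, f n * ((n.factorization p : ℂ) * (Real.log p : ℂ)) =
      ∑ m ∈ (Icc 1 N).filter (fun m => ¬ p ∣ m),
        ∑ r ∈ (range (N + 1)).filter (fun r => p ^ r * m ≤ N),
          f (p ^ r) * f m * ((r : ℂ) * (Real.log p : ℂ)) := by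
    rw [← split_p hp (fun r m => f (p ^ r) * f m * ((r : ℂ) * (Real.log p : ℂ)))]
    refine sum_congr rfl fun n hn => ?_
    simp only [mem_Icc] at hn
    rw [← H.mul (cop (Nat.not_dvd_ordCompl hp (by omega))), Nat.ordProj_mul_ordCompl_eq_self]
  -- the sum over multiples of p
  have b1 : ∑ m ∈ (Icc 1 N).filter (fun m => p ∣ m), ‖f m‖ ≤
      (∑ r ∈ range N, ‖f (p ^ (r + 1))‖) * ∑ n ∈ Icc 1 N, ‖f n‖ := by
    have : ∑ m ∈ (Icc 1 N).filter (fun m => p ∣ m), ‖f m‖ =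
      ∑ n ∈ Icc 1 N, if n.factorization p = 0 then 0 else
        ‖f (p ^ n.factorization p)‖ * ‖f (n / p ^ n.factorization p)‖ := by
      rw [sum_filter]
      refine sum_congr rfl fun n hn => ?_
      simp only [mem_Icc] at hn
      by_cases hd : p ∣ n
      · have : n.factorization p ≠ 0 := ((hp.dvd_iff_one_le_factorization (by omega)).1 hd |> Nat.one_le_iff_ne_zero.1)
        rw [if_pos hd, if_neg this, ← norm_mul,
          ← H.mul (cop (Nat.not_dvd_ordCompl hp (by omega))), Nat.ordProj_mul_ordCompl_eq_self]
      · rw [if_neg hd, if_pos (Nat.factorization_eq_zero_of_not_dvd hd)]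
    rw [this, split_p hp (fun r m => if r = 0 then 0 else ‖f (p ^ r)‖ * ‖f m‖), mul_comm, sum_mul]
    refine (sum_le_sum_of_subset_of_nonneg (filter_subset _ _) ?_).trans (sum_le_sum fun m hm => ?_)
    · intros; refine sum_nonneg fun r _ => ?_
      split_ifs <;> positivity
    · refine (sum_le_sum_of_subset_of_nonneg (filter_subset _ _) ?_).trans ?_
      · intros; split_ifs <;> positivity
      · rw [sum_range_succ', mul_sum]
        simp only [Nat.add_eq_zero_iff, one_ne_zero, and_false, if_false, if_true, add_zero]
        exact le_of_eq (sum_congr rfl fun r _ => mul_comm _ _)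
  have e2 : ∑ m ∈ (Icc 1 N).filter (fun m => p * m ≤ N), f m * (f p * (Real.log p : ℂ)) =
      ∑ m ∈ (Icc 1 N).filter (fun m => ¬ p ∣ m),
        (if p * m ≤ N then f m * (f p * (Real.log p : ℂ)) else 0) +
      ∑ m ∈ (Icc 1 N).filter (fun m => p ∣ m),
        (if p * m ≤ N then f m * (f p * (Real.log p : ℂ)) else 0) := by
    rw [sum_filter, add_comm, sum_filter_add_sum_filter_not]
  have e3 : ∀ m, ∑ r ∈ (range (N + 1)).filter (fun r => p ^ r * m ≤ N),
          f (p ^ r) * f m * ((r : ℂ) * (Real.log p : ℂ)) =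
      (if p * m ≤ N then f m * (f p * (Real.log p : ℂ)) else 0) +
      ∑ r ∈ range N, if p ^ (r + 2) * m ≤ N then
        f (p ^ (r + 2)) * f m * (((r : ℂ) + 2) * (Real.log p : ℂ)) else 0 := by
    intro m
    have hext : ∑ r ∈ (range (N + 1)).filter (fun r => p ^ r * m ≤ N),
          f (p ^ r) * f m * ((r : ℂ) * (Real.log p : ℂ)) =
        ∑ r ∈ range (N + 2), if p ^ r * m ≤ N then
          f (p ^ r) * f m * ((r : ℂ) * (Real.log p : ℂ)) else 0 := by
      rw [sum_filter, sum_range_succ _ (N + 1)]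
      rcases Nat.eq_zero_or_pos m with rfl | hm
      · simp only [mul_zero, zero_le, if_true, H.zero]; simp
      · rw [if_neg, add_zero]
        intro h
        have h1 : N + 1 < p ^ (N + 1) := Nat.lt_pow_self hp.one_lt
        have h2 : p ^ (N + 1) ≤ p ^ (N + 1) * m := Nat.le_mul_of_pos_right _ hm
        omega
    rw [hext, sum_range_succ', sum_range_succ']
    simp only [zero_add, pow_one, Nat.cast_one, one_mul, pow_zero, Nat.cast_zero, zero_mul, mul_zero, ite_self,
      add_zero]
    rw [add_comm]
    congr 1
    · split_ifs
      · ring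
      · rfl
    · refine sum_congr rfl fun r _ => ?_
      have : r + 1 + 1 = r + 2 := rfl
      rw [this]
      push_cast
      rfl
  rw [e1, e2, sum_congr rfl (fun m _ => e3 m), sum_add_distrib]
  have e4 : ∀ a b c : ℂ, ‖a + b - (a + c)‖ ≤ ‖c‖ + ‖b‖ := fun a b c => by
    rw [add_sub_add_left_eq_sub, add_comm]; exact norm_sub_le _ _
  refine (e4 _ _ _).trans ?_
  rw [add_mul]
  refine add_le_add ?_ ?_
  · refine (norm_sum_le _ _).trans ?_
    calc _ ≤ ∑ m ∈ (Icc 1 N).filter (fun m => p ∣ m), ‖f m‖ * (‖f p‖ * Real.log p) := by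
          refine sum_le_sum fun m _ => ?_
          split_ifs
          · rw [norm_mul, norm_mul, Complex.norm_real, Real.norm_of_nonneg hlog]
          · simp; positivity
      _ ≤ (‖f p‖ * Real.log p) * ((∑ r ∈ range N, ‖f (p ^ (r + 1))‖) * ∑ n ∈ Icc 1 N, ‖f n‖) := by
          rw [← sum_mul, mul_comm]
          gcongr
      _ = _ := by rw [← mul_assoc, mul_sum (range N)]
  · refine (norm_sum_le _ _).trans ?_
    calc _ ≤ ∑ m ∈ (Icc 1 N).filter (fun m => ¬ p ∣ m),
            (∑ r ∈ range N, ‖f (p ^ (r + 2))‖ * (((r : ℝ) + 2) * Real.log p)) * ‖f m‖ := by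
          refine sum_le_sum fun m _ => (norm_sum_le _ _).trans ?_
          rw [sum_mul]
          refine sum_le_sum fun r _ => ?_
          split_ifs
          · rw [norm_mul, norm_mul, norm_mul, Complex.norm_real, Real.norm_of_nonneg hlog]
            have : ‖(r:ℂ) + 2‖ = (r:ℝ) + 2 := by
              have : (r:ℂ) + 2 = ((r + 2 : ℕ) : ℂ) := by push_cast; rfl
              rw [this, Complex.norm_natCast]; push_cast; rfl
            rw [this]
            exact le_of_eq (by ring)
          · simp; positivity
      _ ≤ _ := by
          rw [← mul_sum]
          gcongr
          exact filter_subset _ _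

/-- the summed identity -/
lemma logSum (H : FHyp κ β K D f) (N : ℕ) :
    ‖∑ n ∈ Icc 1 N, f n * (Real.log n : ℂ)
      - ∑ m ∈ Icc 1 N, f m * ∑ p ∈ (N + 1).primesBelow.filter (fun p => p * m ≤ N),
          f p * (Real.log p : ℂ)‖
    ≤ 2 * K * ∑ n ∈ Icc 1 N, ‖f n‖ := by
  have hpr : ∀ p ∈ (N+1).primesBelow, p.Prime := fun p hp => Nat.prime_of_mem_primesBelow hp
  have e1 : ∑ n ∈ Icc 1 N, f n * (Real.log n : ℂ) = ∑ p ∈ (N + 1).primesBelow,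
      ∑ n ∈ Icc 1 N, f n * ((n.factorization p : ℂ) * (Real.log p : ℂ)) := by
    rw [sum_comm]
    refine sum_congr rfl fun n hn => ?_
    simp only [mem_Icc] at hn
    rw [log_eq_sum hn.1 hn.2, ← mul_sum]
    push_cast; rfl
  have e2 : ∑ m ∈ Icc 1 N, f m * ∑ p ∈ (N + 1).primesBelow.filter (fun p => p * m ≤ N),
          f p * (Real.log p : ℂ) = ∑ p ∈ (N + 1).primesBelow,
          ∑ m ∈ (Icc 1 N).filter (fun m => p * m ≤ N), f m * (f p * (Real.log p : ℂ)) := by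
    simp_rw [mul_sum, sum_filter]
    rw [sum_comm]
  rw [e1, e2, ← sum_sub_distrib]
  refine (norm_sum_le _ _).trans ((sum_le_sum fun p hp => H.single (hpr p hp)).trans ?_)
  rw [← sum_mul, sum_add_distrib, two_mul]
  gcongr
  · exact H.B1 _ N hpr
  · exact H.B2 _ N hpr

lemma A' (H : FHyp κ β K D f) {y : ℝ} (hy : 1 ≤ y) :
    ‖(∑ p ∈ primesLE y, f p * (Real.log p : ℂ)) - κ * (Real.log y : ℂ)‖ ≤ D + ‖κ‖ := by
  by_cases h : 2 ≤ y
  · exact (H.A y h).trans (by linarith [norm_nonneg κ])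
  · push Not at h
    have hf : ⌊y⌋₊ = 1 := by
      rw [Nat.floor_eq_iff (by linarith)]; constructor <;> norm_num <;> linarith
    have : primesLE y = ∅ := by
      rw [primesLE, hf]; decide
    rw [this, sum_empty, zero_sub, norm_neg, norm_mul, Complex.norm_real,
      Real.norm_of_nonneg (Real.log_nonneg hy)]
    have h1 : Real.log y ≤ 1 := by
      have := Real.log_le_sub_one_of_pos (show 0 < y by linarith); linarith
    have h2 := H.D1
    nlinarith [norm_nonneg κ]

lemma mainIneq (H : FHyp κ β K D f) {x : ℝ} (hx : 2 ≤ x) :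
    ‖(Real.log x : ℂ) * ∑ n ∈ Icc 1 ⌊x⌋₊, f n -
      (κ + 1) * ∑ n ∈ Icc 1 ⌊x⌋₊, f n * ((Real.log x - Real.log n : ℝ) : ℂ)‖
    ≤ (2 * K + 1 + ‖κ‖) * (K * Real.exp K) * D * Real.log x ^ β := by
  set N := ⌊x⌋₊ with hN
  have h1 := H.logSum N
  have h2 : ‖∑ m ∈ Icc 1 N, f m * ∑ p ∈ (N + 1).primesBelow.filter (fun p => p * m ≤ N),
          f p * (Real.log p : ℂ) - ∑ m ∈ Icc 1 N, f m * (κ * ((Real.log x - Real.log m : ℝ) : ℂ))‖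
      ≤ (D + ‖κ‖) * ∑ n ∈ Icc 1 N, ‖f n‖ := by
    rw [← sum_sub_distrib, mul_sum]
    refine (norm_sum_le _ _).trans (sum_le_sum fun m hm => ?_)
    simp only [mem_Icc] at hm
    have hm0 : (0:ℝ) < m := by exact_mod_cast hm.1
    have hmx : (m:ℝ) ≤ x := (Nat.cast_le.mpr hm.2).trans (Nat.floor_le (by linarith))
    have hs : (N + 1).primesBelow.filter (fun p => p * m ≤ N) = primesLE (x / m) := by
      ext p
      have : ⌊x / m⌋₊ = N / m := Nat.floor_div_natCast x m
      simp only [mem_filter, Nat.mem_primesBelow, primesLE, mem_range, this, Nat.lt_succ_iff,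
        Nat.le_div_iff_mul_le (show 0 < m by omega)]
      constructor
      · rintro ⟨⟨_, b⟩, c⟩; exact ⟨c, b⟩
      · rintro ⟨c, b⟩; exact ⟨⟨(Nat.le_mul_of_pos_right p (by omega)).trans c, b⟩, c⟩
    rw [← mul_sub, norm_mul, mul_comm, hs, ← Real.log_div (by linarith) hm0.ne']
    gcongr
    exact H.A' ((one_le_div hm0).2 hmx)
  have h3 := H.absSum_le hx
  rw [← hN] at h3
  have hA0 : 0 ≤ ∑ n ∈ Icc 1 N, ‖f n‖ := sum_nonneg fun _ _ => norm_nonneg _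
  have e : (Real.log x : ℂ) * ∑ n ∈ Icc 1 N, f n -
      (κ + 1) * ∑ n ∈ Icc 1 N, f n * ((Real.log x - Real.log n : ℝ) : ℂ) =
      (∑ n ∈ Icc 1 N, f n * (Real.log n : ℂ)
      - ∑ m ∈ Icc 1 N, f m * ∑ p ∈ (N + 1).primesBelow.filter (fun p => p * m ≤ N),
          f p * (Real.log p : ℂ)) + (∑ m ∈ Icc 1 N, f m * ∑ p ∈ (N + 1).primesBelow.filter (fun p => p * m ≤ N),
          f p * (Real.log p : ℂ) - ∑ m ∈ Icc 1 N, f m * (κ * ((Real.log x - Real.log m : ℝ) : ℂ))) := by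
    rw [sub_add_sub_cancel, mul_sum, mul_sum, ← sum_sub_distrib, ← sum_sub_distrib]
    refine sum_congr rfl fun n _ => ?_
    push_cast; ring
  rw [e]
  refine (norm_add_le _ _).trans ((add_le_add h1 h2).trans ?_)
  rw [← add_mul]
  have hD := H.D1
  have hK := H.K0
  calc (2 * K + (D + ‖κ‖)) * ∑ n ∈ Icc 1 N, ‖f n‖
      ≤ ((2 * K + 1 + ‖κ‖) * D) * (K * Real.exp K * Real.log x ^ β) := by
        gcongr
        nlinarith [norm_nonneg κ]
    _ = _ := by ring

end FHyp

noncomputable def Mu (f : ℕ → ℂ) (u : ℝ) : ℂ := ∑ n ∈ Icc 1 ⌊Real.exp u⌋₊, f n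
noncomputable def Tu (f : ℕ → ℂ) (u : ℝ) : ℂ :=
  ∑ n ∈ Icc 1 ⌊Real.exp u⌋₊, f n * ((u - Real.log n : ℝ) : ℂ)

lemma Tu_eq_max (f : ℕ → ℂ) {v b : ℝ} (h : v ≤ b) :
    Tu f v = ∑ n ∈ Icc 1 ⌊Real.exp b⌋₊, f n * ((max (v - Real.log n) 0 : ℝ) : ℂ) := by
  rw [Tu]
  have hsub : Icc 1 ⌊Real.exp v⌋₊ ⊆ Icc 1 ⌊Real.exp b⌋₊ :=
    Icc_subset_Icc_right (Nat.floor_mono (Real.exp_le_exp.2 h))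
  rw [← sum_subset hsub]
  · refine sum_congr rfl fun n hn => ?_
    simp only [mem_Icc] at hn
    have h1 : (n:ℝ) ≤ Real.exp v := (Nat.le_floor_iff (Real.exp_pos v).le).1 hn.2
    have h2 : Real.log n ≤ v := (Real.log_le_iff_le_exp (by exact_mod_cast hn.1)).2 h1
    rw [max_eq_left (by linarith)]
  · intro n hn hn'
    simp only [mem_Icc, not_and, not_le] at hn hn'
    have h1 : Real.exp v < n := (Nat.floor_lt (Real.exp_pos v).le).1 (hn' hn.1)
    have h2 : v < Real.log n := (Real.lt_log_iff_exp_lt (by exact_mod_cast hn.1)).2 h1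
    rw [max_eq_right (by linarith)]; simp

lemma Tu_cont (f : ℕ → ℂ) : Continuous (Tu f) := by
  rw [continuous_iff_continuousAt]
  intro a
  have h : Continuous fun v : ℝ => ∑ n ∈ Icc 1 ⌊Real.exp (a + 1)⌋₊, f n * ((max (v - Real.log n) 0 : ℝ) : ℂ) := by
    fun_prop
  refine h.continuousAt.congr ?_
  filter_upwards [Iic_mem_nhds (show a < a + 1 by linarith)] with v hv
  exact (Tu_eq_max f hv).symm

lemma Tu_deriv (f : ℕ → ℂ) (u : ℝ) : HasDerivWithinAt (Tu f) (Mu f u) (Set.Ici u) u := by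
  have h : HasDerivAt (fun v : ℝ => ∑ n ∈ Icc 1 ⌊Real.exp u⌋₊, f n * ((v - Real.log n : ℝ) : ℂ)) (Mu f u) u := by
    rw [Mu]
    refine HasDerivAt.fun_sum fun n _ => ?_
    have := (((hasDerivAt_id u).sub_const (Real.log n)).ofReal_comp).const_mul (f n)
    simpa using this
  refine h.hasDerivWithinAt.congr_of_eventuallyEq ?_ rfl
  have h1 : Real.exp u < ⌊Real.exp u⌋₊ + 1 := Nat.lt_floor_add_one _
  have h2 : ∀ᶠ v in nhds u, Real.exp v < ⌊Real.exp u⌋₊ + 1 :=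
    Real.continuous_exp.continuousAt.eventually_lt continuousAt_const h1
  filter_upwards [nhdsWithin_le_nhds h2, self_mem_nhdsWithin] with v hv hv'
  have : ⌊Real.exp v⌋₊ = ⌊Real.exp u⌋₊ := by
    rw [Nat.floor_eq_iff (Real.exp_pos v).le]
    exact ⟨(Nat.floor_le (Real.exp_pos u).le).trans (Real.exp_le_exp.2 hv'), hv⟩
  rw [Tu, this]

lemma ode (f : ℕ → ℂ) (κ : ℂ) {β E : ℝ} (hE : 0 ≤ E) (hβ : β < κ.re + 1)
    (h : ∀ u, Real.log 2 ≤ u → ‖(u : ℂ) * Mu f u - (κ + 1) * Tu f u‖ ≤ E * u ^ β) :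
    ∃ c : ℂ, ∀ u, Real.log 2 ≤ u →
      ‖Mu f u - c * (u : ℂ) ^ κ‖ ≤ E * (1 + ‖κ + 1‖ / (κ.re + 1 - β)) * u ^ (β - 1) := by
  have hl2 : 0 < Real.log 2 := Real.log_pos (by norm_num)
  set γ := κ.re + 1 - β with hγ
  have hγ0 : 0 < γ := by linarith
  set W : ℝ → ℂ := fun u => Tu f u * (u : ℂ) ^ (-(κ + 1)) with hW
  have hWd : ∀ u : ℝ, 0 < u → HasDerivWithinAt W
      ((u : ℂ) ^ (-(κ + 1) - 1) * ((u : ℂ) * Mu f u - (κ + 1) * Tu f u)) (Set.Ici u) u := by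
    intro u hu
    have hu' : (u : ℂ) ≠ 0 := by exact_mod_cast hu.ne'
    have h1 : HasDerivAt (fun y : ℝ => (y : ℂ) ^ (-(κ + 1))) ((-(κ + 1)) * (u : ℂ) ^ (-(κ + 1) - 1) * 1) u :=
      ((hasDerivAt_id (u : ℂ)).cpow_const (Or.inl (by simpa using hu))).comp_ofReal
    refine ((Tu_deriv f u).mul h1.hasDerivWithinAt).congr_deriv ?_
    have : (u : ℂ) ^ (-(κ + 1)) = (u : ℂ) ^ (-(κ + 1) - 1) * u := by
      rw [Complex.cpow_sub _ _ hu', Complex.cpow_one]; field_simp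
    rw [this]; ring
  have hWc : ∀ a b : ℝ, 0 < a → ContinuousOn W (Set.Icc a b) := by
    intro a b ha v hv
    have hv0 : 0 < v := lt_of_lt_of_le ha hv.1
    refine ((Tu_cont f).continuousAt.mul ?_).continuousWithinAt
    exact (Complex.continuousAt_ofReal_cpow_const v _ (Or.inr hv0.ne'))
  have hdiff : ∀ a b : ℝ, Real.log 2 ≤ a → a ≤ b → ‖W b - W a‖ ≤ E / γ * a ^ (-γ) := by
    intro a b ha hab
    have ha0 : 0 < a := lt_of_lt_of_le hl2 ha
    have hBd : ∀ v : ℝ, 0 < v → HasDerivAt (fun v : ℝ => E / γ * (a ^ (-γ) - v ^ (-γ))) (E * v ^ (-γ - 1)) v := by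
      intro v hv
      have := ((Real.hasDerivAt_rpow_const (x := v) (p := -γ) (Or.inl hv.ne')).const_sub (a ^ (-γ))).const_mul (E / γ)
      refine this.congr_deriv ?_
      field_simp
    have key := image_norm_le_of_norm_deriv_right_le_deriv_boundary' (f := fun v => W v - W a)
      (a := a) (b := b) (B := fun v : ℝ => E / γ * (a ^ (-γ) - v ^ (-γ))) (B' := fun v => E * v ^ (-γ - 1))
      ((hWc a b ha0).sub continuousOn_const)
      (fun v hv => (hWd v (lt_of_lt_of_le ha0 hv.1)).sub_const _)
      (by simp)
      (fun v hv => (hBd v (lt_of_lt_of_le ha0 hv.1)).continuousAt.continuousWithinAt)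
      (fun v hv => (hBd v (lt_of_lt_of_le ha0 hv.1)).hasDerivWithinAt)
      (by
        intro v hv
        have hv0 : 0 < v := lt_of_lt_of_le ha0 hv.1
        rw [norm_mul, Complex.norm_cpow_eq_rpow_re_of_pos hv0]
        have e : (-(κ + 1) - 1).re = (-γ - 1) - β := by simp [hγ]; ring
        rw [e]
        calc v ^ (-γ - 1 - β) * _ ≤ v ^ (-γ - 1 - β) * (E * v ^ β) := by
              gcongr
              exact h v (ha.trans hv.1)
          _ = E * (v ^ (-γ - 1 - β) * v ^ β) := by ring
          _ = _ := by rw [← Real.rpow_add hv0]; congr 2; ring)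
      (Set.right_mem_Icc.2 hab)
    refine key.trans ?_
    have : 0 ≤ b ^ (-γ) := Real.rpow_nonneg (by linarith) _
    have : 0 ≤ E / γ := by positivity
    gcongr
    linarith
  have hl1 : Real.log 2 ≤ 1 := by have := Real.log_two_lt_d9; linarith
  have hcau : CauchySeq (fun n : ℕ => W ((n : ℝ) + 1)) := by
    refine cauchySeq_of_le_tendsto_0' (fun n : ℕ => E / γ * ((n : ℝ) + 1) ^ (-γ)) ?_ ?_
    · intro n m hnm
      rw [dist_comm, dist_eq_norm]
      have : (n:ℝ) ≤ m := by exact_mod_cast hnm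
      exact hdiff _ _ (by have : (0:ℝ) ≤ n := Nat.cast_nonneg n; linarith) (by linarith)
    · have h1 : Tendsto (fun n : ℕ => (n : ℝ) + 1) atTop atTop :=
        tendsto_atTop_add_const_right _ _ tendsto_natCast_atTop_atTop
      simpa using ((tendsto_rpow_neg_atTop hγ0).comp h1).const_mul (E / γ)
  obtain ⟨c, hc⟩ := cauchySeq_tendsto_of_complete hcau
  have hlim : ∀ u, Real.log 2 ≤ u → ‖W u - c‖ ≤ E / γ * u ^ (-γ) := by
    intro u hu
    rw [norm_sub_rev]
    refine le_of_tendsto ((hc.sub_const (W u)).norm) ?_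
    filter_upwards [eventually_ge_atTop ⌈u⌉₊] with n hn
    have : u ≤ n := Nat.ceil_le.1 hn
    exact hdiff _ _ hu (by linarith)
  refine ⟨(κ + 1) * c, fun u hu => ?_⟩
  have hu0 : 0 < u := lt_of_lt_of_le hl2 hu
  have hu' : (u : ℂ) ≠ 0 := by exact_mod_cast hu0.ne'
  have e1 : Mu f u - (κ + 1) * c * (u : ℂ) ^ κ =
      ((u : ℂ) * Mu f u - (κ + 1) * Tu f u) / u + (κ + 1) * (W u - c) * (u : ℂ) ^ κ := by
    have : (u : ℂ) ^ (-(κ + 1)) * (u : ℂ) ^ κ = (u : ℂ)⁻¹ := by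
      rw [← Complex.cpow_add _ _ hu', show -(κ + 1) + κ = -1 by ring, Complex.cpow_neg_one]
    have h3 : W u * (u : ℂ) ^ κ = Tu f u * (u : ℂ)⁻¹ := by
      rw [hW]; simp only; rw [mul_assoc, this]
    have : (κ + 1) * (W u - c) * (u : ℂ) ^ κ = (κ + 1) * (W u * (u : ℂ) ^ κ) - (κ + 1) * c * (u : ℂ) ^ κ := by ring
    rw [this, h3]
    field_simp
    ring
  rw [e1]
  refine (norm_add_le _ _).trans ?_
  have b1 : ‖((u : ℂ) * Mu f u - (κ + 1) * Tu f u) / u‖ ≤ E * u ^ (β - 1) := by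
    rw [norm_div, Complex.norm_real, Real.norm_of_nonneg hu0.le, Real.rpow_sub_one hu0.ne', ← mul_div_assoc]
    gcongr
    exact h u hu
  have b2 : ‖(κ + 1) * (W u - c) * (u : ℂ) ^ κ‖ ≤ ‖κ + 1‖ * (E / γ * u ^ (-γ)) * u ^ κ.re := by
    rw [norm_mul, norm_mul, Complex.norm_cpow_eq_rpow_re_of_pos hu0]
    gcongr
    exact hlim u hu
  have e2 : u ^ (-γ) * u ^ κ.re = u ^ (β - 1) := by
    rw [← Real.rpow_add hu0]; congr 1; rw [hγ]; ring
  calc _ ≤ E * u ^ (β - 1) + ‖κ + 1‖ * (E / γ * u ^ (-γ)) * u ^ κ.re := add_le_add b1 b2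
    _ = E * u ^ (β - 1) + ‖κ + 1‖ * (E / γ) * (u ^ (-γ) * u ^ κ.re) := by ring
    _ = _ := by rw [e2]; ring

lemma FHyp.asymp {κ : ℂ} {β K D : ℝ} {f : ℕ → ℂ} (H : FHyp κ β K D f) (hβ : β < κ.re + 1) :
    ∃ c : ℂ, ∀ x : ℝ, 2 ≤ x → ‖∑ n ∈ Icc 1 ⌊x⌋₊, f n - c * (Real.log x : ℂ) ^ κ‖ ≤
      ((2 * K + 1 + ‖κ‖) * (K * Real.exp K)) * (1 + ‖κ + 1‖ / (κ.re + 1 - β)) * D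
        * Real.log x ^ (β - 1) := by
  have hK := H.K0
  have hD := H.D1
  obtain ⟨c, hc⟩ := ode f κ (β := β) (E := (2 * K + 1 + ‖κ‖) * (K * Real.exp K) * D) (by positivity) hβ (by
    intro u hu
    have := H.mainIneq (x := Real.exp u) ((Real.log_le_iff_le_exp (by norm_num)).1 hu)
    rw [Real.log_exp] at this
    exact this)
  refine ⟨c, fun x hx => ?_⟩
  have := hc (Real.log x) (Real.log_le_log (by norm_num) hx)
  rw [Mu, Real.exp_log (by linarith)] at this
  refine this.trans (le_of_eq (by ring))

lemma mertens_aux : ∃ C : ℝ, 0 ≤ C ∧ ∀ S : Finset ℕ, (∀ p ∈ S, p.Prime) →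
    ∑ p ∈ S, Real.log p / ((p : ℝ) * (p - 1)) ≤ C := by
  have hs : Summable fun n : ℕ => 4 * (n : ℝ) ^ (-(3/2) : ℝ) :=
    (Real.summable_nat_rpow.2 (by norm_num)).mul_left 4
  refine ⟨∑' n : ℕ, 4 * (n : ℝ) ^ (-(3/2) : ℝ), tsum_nonneg fun n => by positivity, fun S hS => ?_⟩
  refine le_trans (sum_le_sum fun p hp => ?_) (hs.sum_le_tsum S fun n _ => by positivity)
  have h2 : (2:ℝ) ≤ p := by exact_mod_cast (hS p hp).two_le
  have hp0 : (0:ℝ) < p := by linarith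
  have h1 : Real.log p ≤ (p:ℝ) ^ (1/2 : ℝ) / (1/2) := Real.log_le_rpow_div hp0.le (by norm_num)
  rw [div_le_iff₀ (by nlinarith)]
  have e : (p:ℝ) ^ (1/2 : ℝ) = (p:ℝ) ^ (-(3/2) : ℝ) * (p:ℝ) ^ 2 := by
    rw [← Real.rpow_natCast, ← Real.rpow_add hp0]; norm_num
  rw [e] at h1
  have hq : 0 ≤ (p:ℝ) ^ (-(3/2) : ℝ) := by positivity
  have : (p:ℝ)^2 ≤ 2 * (p * (p - 1)) := by nlinarith
  nlinarith

lemma log_fact_eq (N : ℕ) : Real.log (N.factorial) =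
    ∑ p ∈ (N + 1).primesBelow, ((N.factorial).factorization p : ℝ) * Real.log p := by
  rw [Real.log_nat_eq_sum_factorization, Finsupp.sum]
  refine sum_subset ?_ ?_
  · intro p hp
    have hp' := Nat.support_factorization _ ▸ hp
    have hpp := Nat.prime_of_mem_primeFactors hp'
    rw [Nat.mem_primesBelow]
    exact ⟨Nat.lt_succ_of_le ((hpp.dvd_factorial).1 (Nat.dvd_of_mem_primeFactors hp')), hpp⟩
  · intro p _ hp
    rw [Finsupp.notMem_support_iff.mp hp]; simp

lemma mertens : ∃ C : ℝ, ∀ N : ℕ, 1 ≤ N →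
    |∑ p ∈ (N + 1).primesBelow, Real.log p / p - Real.log N| ≤ C := by
  obtain ⟨C, hC0, hC⟩ := mertens_aux
  refine ⟨Real.log 4 + 1 + C, fun N hN => ?_⟩
  have hN0 : (0:ℝ) < N := by exact_mod_cast hN
  have hpr : ∀ p ∈ (N+1).primesBelow, p.Prime := fun p hp => Nat.prime_of_mem_primesBelow hp
  have hf0 : (0:ℝ) < N.factorial := by exact_mod_cast N.factorial_pos
  have up : Real.log N.factorial ≤ N * Real.log N := by
    rw [← Real.log_pow]
    exact Real.log_le_log hf0 (by exact_mod_cast N.factorial_le_pow)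
  have low : N * Real.log N - N ≤ Real.log N.factorial := by
    have := Real.pow_div_factorial_le_exp (x := N) hN0.le N
    have h2 := Real.log_le_log (by positivity) this
    rw [Real.log_exp, Real.log_div (by positivity) hf0.ne', Real.log_pow] at h2
    linarith
  have hth : ∑ p ∈ (N + 1).primesBelow, Real.log p ≤ Real.log 4 * N := by
    have := Chebyshev.theta_le_log4_mul_x hN0.le
    rw [Chebyshev.theta_eq_sum_Icc, Nat.floor_natCast] at this
    refine le_trans (le_of_eq ?_) this
    refine sum_congr ?_ fun _ _ => rfl
    ext p
    simp only [Nat.mem_primesBelow, mem_filter, mem_Icc, Nat.lt_succ_iff, zero_le, true_and]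
  have l1 : (N:ℝ) * ∑ p ∈ (N + 1).primesBelow, Real.log p / p - Real.log 4 * N ≤ Real.log N.factorial := by
    rw [log_fact_eq]
    have : (N:ℝ) * ∑ p ∈ (N + 1).primesBelow, Real.log p / p - ∑ p ∈ (N + 1).primesBelow, Real.log p ≤
        ∑ p ∈ (N + 1).primesBelow, ((N.factorial).factorization p : ℝ) * Real.log p := by
      rw [mul_sum, ← sum_sub_distrib]
      refine sum_le_sum fun p hp => ?_
      have hpp := hpr p hp
      have hlog : 0 ≤ Real.log p := Real.log_natCast_nonneg p
      have h1 : N / p ≤ (N.factorial).factorization p := by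
        rw [Nat.factorization_factorial hpp (b := Nat.log p N + 2) (by omega)]
        have := single_le_sum (f := fun i => N / p ^ i) (s := Ico 1 (Nat.log p N + 2))
          (fun _ _ => Nat.zero_le _) (show 1 ∈ Ico 1 (Nat.log p N + 2) by simp)
        simpa using this
      have h2 : (N:ℝ) / p - 1 ≤ ((N.factorial).factorization p : ℝ) := by
        have h3 : (N:ℝ) / p < (⌊(N:ℝ) / p⌋₊ : ℝ) + 1 := Nat.lt_floor_add_one _
        rw [Nat.floor_div_eq_div] at h3
        have h4 : ((N / p : ℕ) : ℝ) ≤ ((N.factorial).factorization p : ℝ) := by exact_mod_cast h1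
        linarith
      calc (N:ℝ) * (Real.log p / p) - Real.log p = ((N:ℝ) / p - 1) * Real.log p := by ring
        _ ≤ _ := by gcongr
    linarith
  have l2 : Real.log N.factorial ≤ N * (∑ p ∈ (N + 1).primesBelow, Real.log p / p + C) := by
    rw [log_fact_eq]
    have : ∑ p ∈ (N + 1).primesBelow, ((N.factorial).factorization p : ℝ) * Real.log p ≤
        N * (∑ p ∈ (N + 1).primesBelow, Real.log p / p + 
          ∑ p ∈ (N + 1).primesBelow, Real.log p / ((p : ℝ) * (p - 1))) := by
      rw [← sum_add_distrib, mul_sum]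
      refine sum_le_sum fun p hp => ?_
      have hpp := hpr p hp
      have h2 : (2:ℝ) ≤ p := by exact_mod_cast hpp.two_le
      have hlog : 0 ≤ Real.log p := Real.log_natCast_nonneg p
      have h1 : ((N.factorial).factorization p : ℝ) ≤ N / (p - 1) := by
        have := Nat.factorization_factorial_le_div_pred hpp N
        have h3 : ((N / (p - 1) : ℕ) : ℝ) ≤ (N:ℝ) / ((p - 1 : ℕ) : ℝ) := Nat.cast_div_le
        rw [Nat.cast_sub hpp.one_le, Nat.cast_one] at h3
        refine le_trans ?_ h3
        exact_mod_cast this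
      have e : (N:ℝ) * (Real.log p / p + Real.log p / ((p : ℝ) * (p - 1))) = N / (p - 1) * Real.log p := by
        have : (p:ℝ) - 1 ≠ 0 := by linarith
        field_simp
        ring
      rw [e]
      gcongr
    refine this.trans ?_
    gcongr
    exact hC _ hpr
  set X := ∑ p ∈ (N + 1).primesBelow, Real.log p / p
  rw [abs_le]
  have hl4 : 0 ≤ Real.log 4 := Real.log_nonneg (by norm_num)
  constructor
  · have : (N:ℝ) * (Real.log N - 1) ≤ N * (X + C) := by linarith
    have := le_of_mul_le_mul_left this hN0
    linarith
  · have : (N:ℝ) * (X - Real.log 4) ≤ N * Real.log N := by linarith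
    have := le_of_mul_le_mul_left this hN0
    linarith

/-- the twisted prime coefficients -/
noncomputable def apr (f : ℕ → ℂ) (κ : ℂ) (n : ℕ) : ℂ := if n.Prime then f n - κ / n else 0

lemma FHyp.apr_conv {κ : ℂ} {β K D : ℝ} {f : ℕ → ℂ} (H : FHyp κ β K D f) :
    ∃ S : ℂ, Tendsto (fun N => ∑ n ∈ range N, apr f κ n) atTop (nhds S) := by
  obtain ⟨C, hC⟩ := mertens
  have hb : ∀ N : ℕ, ‖∑ n ∈ range N, (Real.log ((n : ℝ) + 2) : ℂ) * apr f κ (n + 2)‖ ≤ D + ‖κ‖ + ‖κ‖ * C := by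
    intro N
    have h1 := H.A' (y := ((N + 1 : ℕ) : ℝ)) (by push_cast; have : (0:ℝ) ≤ N := Nat.cast_nonneg N; linarith)
    have h2 := hC (N + 1) (by omega)
    have hP : primesLE ((N + 1 : ℕ) : ℝ) = (N + 2).primesBelow := by
      rw [primesLE, Nat.floor_natCast]; rfl
    rw [hP] at h1
    have e : ∑ n ∈ range N, (Real.log ((n : ℝ) + 2) : ℂ) * apr f κ (n + 2) =
        (∑ p ∈ (N + 2).primesBelow, f p * (Real.log p : ℂ) - κ * (Real.log ((N + 1 : ℕ) : ℝ) : ℂ)) -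
        κ * ((∑ p ∈ (N + 2).primesBelow, Real.log p / p - Real.log ((N + 1 : ℕ) : ℝ) : ℝ) : ℂ) := by
      have : ∑ n ∈ range N, (Real.log ((n : ℝ) + 2) : ℂ) * apr f κ (n + 2) =
          ∑ p ∈ (N + 2).primesBelow, (f p - κ / p) * (Real.log p : ℂ) := by
        rw [Nat.primesBelow, sum_filter, sum_range_succ', sum_range_succ']
        simp only [Nat.not_prime_zero, Nat.not_prime_one, zero_add, if_false, add_zero]
        refine sum_congr rfl fun n _ => ?_
        have : n + 1 + 1 = n + 2 := rfl
        rw [this, apr]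
        split_ifs
        · push_cast; ring
        · simp
      rw [this]
      push_cast
      simp_rw [sub_mul]
      rw [sum_sub_distrib, mul_sub, mul_sum]
      have e2 : ∀ x : ℕ, κ / x * (Real.log x : ℂ) = κ * ((Real.log x : ℂ) / x) := fun x => by ring
      simp_rw [← Complex.natCast_log] at *
      simp_rw [e2]
      ring
    rw [e]
    refine (norm_sub_le _ _).trans (add_le_add h1 ?_)
    rw [norm_mul, Complex.norm_real, Real.norm_eq_abs]
    gcongr
  have hanti : Antitone fun n : ℕ => (Real.log ((n : ℝ) + 2))⁻¹ := by
    intro a b hab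
    have ha : (0:ℝ) ≤ a := Nat.cast_nonneg a
    have hab' : (a:ℝ) ≤ b := by exact_mod_cast hab
    have : 0 < Real.log ((a:ℝ) + 2) := Real.log_pos (by linarith)
    exact inv_anti₀ this (Real.log_le_log (by linarith) (by linarith))
  have h0 : Tendsto (fun n : ℕ => (Real.log ((n : ℝ) + 2))⁻¹) atTop (nhds 0) :=
    (Real.tendsto_log_atTop.comp (tendsto_atTop_add_const_right _ _ tendsto_natCast_atTop_atTop)).inv_tendsto_atTop
  obtain ⟨S, hS⟩ := cauchySeq_tendsto_of_complete
    (hanti.cauchySeq_series_mul_of_tendsto_zero_of_bounded h0 hb)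
  refine ⟨S, ?_⟩
  rw [← tendsto_add_atTop_iff_nat 2]
  refine hS.congr fun N => ?_
  rw [sum_range_succ', sum_range_succ']
  simp only [apr, Nat.not_prime_zero, zero_add, Nat.not_prime_one, if_false, add_zero]
  refine sum_congr rfl fun n _ => ?_
  have : Real.log ((n:ℝ) + 2) ≠ 0 := (Real.log_pos (by have : (0:ℝ) ≤ n := Nat.cast_nonneg n; linarith)).ne'
  rw [Complex.real_smul, ← mul_assoc, ← Complex.ofReal_mul, inv_mul_cancel₀ this,
    Complex.ofReal_one, one_mul]

section
open MeasureTheory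

lemma Mu_measurable (F : ℕ → ℂ) : Measurable (Mu F) := by
  have h : Measurable (fun n : ℕ => ∑ k ∈ Icc 1 n, F k) := measurable_from_top
  exact h.comp (Nat.measurable_floor.comp Real.measurable_exp)

lemma Mu_integral (F : ℕ → ℂ) {s : ℝ} (hs : 0 < s) :
    (s : ℂ) * ∫ t in Set.Ioi (1 : ℝ), (∑ k ∈ Icc 1 ⌊t⌋₊, F k) * (t : ℂ) ^ (-((s : ℂ) + 1)) =
    ∫ v in Set.Ioi (0 : ℝ), Mu F (v / s) * (Real.exp (-v) : ℂ) := by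
  have himg : (fun v : ℝ => Real.exp (v / s)) '' Set.Ioi 0 = Set.Ioi 1 := by
    ext t
    simp only [Set.mem_image, Set.mem_Ioi]
    constructor
    · rintro ⟨v, hv, rfl⟩
      exact Real.one_lt_exp_iff.2 (by positivity)
    · intro ht
      refine ⟨s * Real.log t, mul_pos hs (Real.log_pos ht), ?_⟩
      rw [mul_div_cancel_left₀ _ hs.ne', Real.exp_log (by linarith)]
  rw [← himg, integral_image_eq_integral_abs_deriv_smul (f := fun v : ℝ => Real.exp (v / s)) (f' := fun v => Real.exp (v / s) * (1 / s)) measurableSet_Ioi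
    (fun v _ => (((hasDerivAt_id' v).div_const s).exp).hasDerivWithinAt)
    (fun a _ b _ h => by
      have := Real.exp_injective h
      field_simp at this
      exact this)]
  rw [← integral_const_mul]
  refine setIntegral_congr_fun measurableSet_Ioi fun v _ => ?_
  have hpos := Real.exp_pos (v / s)
  have hsC : (s : ℂ) ≠ 0 := by exact_mod_cast hs.ne'
  rw [abs_of_pos (by positivity), Complex.real_smul]
  have e : ((Real.exp (v / s) : ℝ) : ℂ) ^ (-((s : ℂ) + 1)) = (Real.exp (-v) : ℂ) * ((Real.exp (v / s) : ℝ) : ℂ)⁻¹ := by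
    have : -((s : ℂ) + 1) = ((-(s + 1) : ℝ) : ℂ) := by push_cast; ring
    rw [this, ← Complex.ofReal_cpow hpos.le, ← Complex.ofReal_inv, ← Complex.ofReal_mul]
    congr 1
    rw [← Real.exp_mul, ← Real.exp_neg, ← Real.exp_add]
    congr 1
    field_simp
    ring
  rw [e, Mu]
  have : ((Real.exp (v / s) : ℝ) : ℂ) ≠ 0 := by exact_mod_cast hpos.ne'
  push_cast at this ⊢
  field_simp

lemma Mu_bound (F : ℕ → ℂ) (κ c : ℂ)
    (hO : Tendsto (fun u : ℝ => Mu F u * (u : ℂ) ^ (-κ)) atTop (nhds c)) :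
    ∃ C : ℝ, 0 ≤ C ∧ ∀ u : ℝ, 0 < u → ‖Mu F u‖ ≤ C * (u ^ κ.re + u ^ (min κ.re 0)) := by
  have h1 : ∀ᶠ u : ℝ in atTop, ‖Mu F u * (u : ℂ) ^ (-κ)‖ < ‖c‖ + 1 :=
    hO.norm.eventually_lt_const (by linarith)
  obtain ⟨U, hU⟩ := eventually_atTop.1 (h1.and (eventually_ge_atTop 1))
  set U' := max U 1
  set m := min κ.re 0 with hm
  set B := ∑ n ∈ Icc 1 ⌊Real.exp U'⌋₊, ‖F n‖ with hB
  have hB0 : 0 ≤ B := sum_nonneg fun _ _ => norm_nonneg _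
  have hU'0 : 0 < U' := lt_of_lt_of_le one_pos (le_max_right _ _)
  have hBU : 0 ≤ B * U' ^ (-m) := by positivity
  refine ⟨(‖c‖ + 1) + B * U' ^ (-m), by positivity, fun u hu => ?_⟩
  have p1 : 0 < u ^ κ.re := Real.rpow_pos_of_pos hu _
  have p2 : 0 < u ^ m := Real.rpow_pos_of_pos hu _
  rcases le_total U' u with h | h
  · have h2 := (hU u ((le_max_left _ _).trans h)).1
    rw [norm_mul, Complex.norm_cpow_eq_rpow_re_of_pos hu, Complex.neg_re, Real.rpow_neg hu.le,
      ← div_eq_mul_inv, div_lt_iff₀ p1] at h2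
    nlinarith [norm_nonneg c]
  · have h2 : ‖Mu F u‖ ≤ B := by
      refine (norm_sum_le _ _).trans ?_
      refine sum_le_sum_of_subset_of_nonneg ?_ (fun _ _ _ => norm_nonneg _)
      exact Icc_subset_Icc_right (Nat.floor_mono (Real.exp_le_exp.2 h))
    have h3 : 1 ≤ U' ^ (-m) * u ^ m := by
      have : U' ^ m ≤ u ^ m := Real.rpow_le_rpow_of_nonpos hu h (min_le_right _ _)
      rw [Real.rpow_neg hU'0.le]
      rw [inv_mul_eq_div, one_le_div (Real.rpow_pos_of_pos hU'0 _)]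
      exact this
    have h4 : B ≤ B * U' ^ (-m) * u ^ m := by
      rw [mul_assoc]; exact le_mul_of_one_le_right hB0 h3
    nlinarith [norm_nonneg c, mul_nonneg hBU p1.le, mul_nonneg (norm_nonneg c) p1.le, mul_nonneg (norm_nonneg c) p2.le]

lemma abelian_int (F : ℕ → ℂ) (κ c : ℂ) (hκ : -1 < κ.re)
    (hO : Tendsto (fun u : ℝ => Mu F u * (u : ℂ) ^ (-κ)) atTop (nhds c)) :
    Tendsto (fun s : ℝ => (s : ℂ) ^ κ * ∫ v in Set.Ioi (0 : ℝ), Mu F (v / s) * (Real.exp (-v) : ℂ))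
      (nhdsWithin 0 (Set.Ioi 0)) (nhds (c * Complex.Gamma (κ + 1))) := by
  obtain ⟨C, hC0, hC⟩ := Mu_bound F κ c hO
  set m := min κ.re 0 with hm
  have hm1 : -1 < m := lt_min hκ (by norm_num)
  have hG : c * Complex.Gamma (κ + 1) =
      ∫ v in Set.Ioi (0 : ℝ), c * ((Real.exp (-v) : ℂ) * (v : ℂ) ^ κ) := by
    rw [integral_const_mul, Complex.Gamma_eq_integral (by simp; linarith), Complex.GammaIntegral]
    simp
  rw [hG]
  simp_rw [← integral_const_mul]
  have hInteg : ∀ a : ℝ, -1 < a → IntegrableOn (fun v : ℝ => Real.exp (-v) * v ^ a) (Set.Ioi 0) := fun a ha => by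
    have := Real.GammaIntegral_convergent (s := a + 1) (by linarith)
    simpa using this
  refine tendsto_integral_filter_of_dominated_convergence
    (fun v : ℝ => C * (Real.exp (-v) * v ^ κ.re + Real.exp (-v) * v ^ m)) ?_ ?_ ?_ ?_
  · refine Eventually.of_forall fun s => ?_
    refine Measurable.aestronglyMeasurable ?_
    refine Measurable.const_mul (Measurable.mul ((Mu_measurable F).comp (measurable_id.div_const s)) ?_) _
    fun_prop
  · filter_upwards [self_mem_nhdsWithin, nhdsWithin_le_nhds (Iic_mem_nhds (show (0:ℝ) < 1 by norm_num))] with s hs hs1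
    simp only [Set.mem_Ioi, Set.mem_Iic] at hs hs1
    refine (ae_restrict_iff' measurableSet_Ioi).2 (Eventually.of_forall fun v hv => ?_)
    simp only [Set.mem_Ioi] at hv
    rw [norm_mul, norm_mul, Complex.norm_cpow_eq_rpow_re_of_pos hs, Complex.norm_real,
      Real.norm_of_nonneg (Real.exp_pos _).le]
    have hq := hC (v / s) (by positivity)
    rw [Real.div_rpow hv.le hs.le, Real.div_rpow hv.le hs.le] at hq
    have hsk : 0 < s ^ κ.re := Real.rpow_pos_of_pos hs _
    have hsm : 0 < s ^ m := Real.rpow_pos_of_pos hs _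
    have hvm : 0 < v ^ m := Real.rpow_pos_of_pos hv _
    have hle : s ^ κ.re ≤ s ^ m := Real.rpow_le_rpow_of_exponent_ge hs hs1 (min_le_left _ _)
    calc s ^ κ.re * (‖Mu F (v / s)‖ * Real.exp (-v))
        ≤ s ^ κ.re * ((C * (v ^ κ.re / s ^ κ.re + v ^ m / s ^ m)) * Real.exp (-v)) := by gcongr
      _ = C * (Real.exp (-v) * v ^ κ.re + Real.exp (-v) * v ^ m * (s ^ κ.re / s ^ m)) := by
          field_simp
      _ ≤ _ := by
          have h5 : Real.exp (-v) * v ^ m * (s ^ κ.re / s ^ m) ≤ Real.exp (-v) * v ^ m :=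
            mul_le_of_le_one_right (by positivity) ((div_le_one hsm).2 hle)
          exact mul_le_mul_of_nonneg_left (by linarith) hC0
  · exact ((hInteg _ hκ).add (hInteg _ hm1)).const_mul C
  · refine (ae_restrict_iff' measurableSet_Ioi).2 (Eventually.of_forall fun v hv => ?_)
    simp only [Set.mem_Ioi] at hv
    have hlim : Tendsto (fun s : ℝ => v / s) (nhdsWithin 0 (Set.Ioi 0)) atTop := by
      simp_rw [div_eq_mul_inv]
      exact tendsto_inv_nhdsGT_zero.const_mul_atTop hv
    have h2 := ((hO.comp hlim).mul_const ((Real.exp (-v) : ℂ) * (v : ℂ) ^ κ))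
    refine h2.congr' ?_
    filter_upwards [self_mem_nhdsWithin] with s hs
    simp only [Set.mem_Ioi] at hs
    simp only [Function.comp]
    have e : ((v / s : ℝ) : ℂ) ^ (-κ) * (v : ℂ) ^ κ = (s : ℂ) ^ κ := by
      have hv' : (v : ℂ) = ((v / s : ℝ) : ℂ) * (s : ℝ) := by
        rw [← Complex.ofReal_mul]; congr 1; field_simp
      have hq : ((v / s : ℝ) : ℂ) ≠ 0 := by
        have : v / s ≠ 0 := by positivity
        exact_mod_cast this
      conv_lhs => rw [hv']
      rw [Complex.mul_cpow_ofReal_nonneg (by positivity) hs.le, ← mul_assoc, ← Complex.cpow_add _ _ hq]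
      simp
    rw [← e]; ring

lemma abelian (F : ℕ → ℂ) (κ c : ℂ) (hκ : -1 < κ.re)
    (hS : ∀ s : ℝ, 0 < s → LSeriesSummable F s)
    (hO : Tendsto (fun u : ℝ => Mu F u * (u : ℂ) ^ (-κ)) atTop (nhds c)) :
    Tendsto (fun s : ℝ => (s : ℂ) ^ κ * LSeries F s)
      (nhdsWithin 0 (Set.Ioi 0)) (nhds (c * Complex.Gamma (κ + 1))) := by
  refine (abelian_int F κ c hκ hO).congr' ?_
  filter_upwards [self_mem_nhdsWithin] with s hs
  simp only [Set.mem_Ioi] at hs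
  obtain ⟨C, hC0, hC⟩ := Mu_bound F κ c hO
  rw [← Mu_integral F hs, ← LSeries_eq_mul_integral F (r := s / 2) (by positivity) (by simp; linarith) (hS s hs)]
  have ho : ∀ a : ℝ, (fun n : ℕ => Real.log n ^ a) =O[atTop] fun n : ℕ => (n : ℝ) ^ (s / 2) := fun a =>
    ((isLittleO_log_rpow_rpow_atTop a (show 0 < s / 2 by positivity)).comp_tendsto
      tendsto_natCast_atTop_atTop).isBigO
  refine Asymptotics.IsBigO.trans ?_ ((ho κ.re).add (ho (min κ.re 0)))
  refine Asymptotics.IsBigO.of_bound C ?_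
  filter_upwards [eventually_ge_atTop 2] with n hn
  have hn2 : (2:ℝ) ≤ n := by exact_mod_cast hn
  have hl : 0 < Real.log n := Real.log_pos (by linarith)
  have := hC (Real.log n) hl
  rw [Mu, Real.exp_log (by linarith), Nat.floor_natCast] at this
  refine this.trans ?_
  gcongr
  exact Real.le_norm_self _

end

lemma norm_exp_sub_one_le' (w : ℂ) : ‖Complex.exp w - 1‖ ≤ ‖w‖ * Real.exp ‖w‖ := by
  have := Complex.norm_exp_sub_sum_le_norm_mul_exp w 1
  simpa using this

lemma norm_exp_sub_one_sub_le' (w : ℂ) : ‖Complex.exp w - 1 - w‖ ≤ ‖w‖ ^ 2 * Real.exp ‖w‖ := by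
  have := Complex.norm_exp_sub_sum_le_norm_mul_exp w 2
  simpa [sum_range_succ, sub_sub] using this

lemma local_bound (κ : ℂ) (B : ℝ) (hB : 0 ≤ B) (z a T : ℂ) (hz : ‖z‖ ≤ 1 / 2) (ha : ‖a‖ ≤ B) :
    ‖(1 - z) ^ κ * (1 + a + T) * Complex.exp (-(a - κ * z)) - 1‖ ≤
      (Real.exp ‖κ‖ * (Real.exp B * (1 + B) + 1 + Real.exp B) + ‖κ‖ * Real.exp ‖κ‖) *
        (‖a‖ ^ 2 + ‖z‖ ^ 2 + ‖T‖) := by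
  set w := κ * (Complex.log (1 + -z) - -z) with hw
  have hz1 : ‖-z‖ < 1 := by rw [norm_neg]; linarith
  have hwn : ‖w‖ ≤ ‖κ‖ * ‖z‖ ^ 2 := by
    rw [hw, norm_mul]
    gcongr
    refine (Complex.norm_log_one_add_sub_self_le hz1).trans ?_
    rw [norm_neg]
    have h1 : (1 - ‖z‖)⁻¹ ≤ 2 := by
      rw [inv_le_comm₀ (by linarith) (by norm_num)]; norm_num; linarith
    nlinarith [sq_nonneg ‖z‖]
  have hwk : ‖w‖ ≤ ‖κ‖ := by
    refine hwn.trans (mul_le_of_le_one_right (norm_nonneg _) ?_)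
    nlinarith [norm_nonneg z]
  have hne : (1 - z) ≠ 0 := by
    intro h
    have : z = 1 := by linear_combination -h
    rw [this] at hz; norm_num at hz
  have e1 : (1 - z) ^ κ * (1 + a + T) * Complex.exp (-(a - κ * z)) =
      Complex.exp w * ((1 + a + T) * Complex.exp (-a)) := by
    rw [Complex.cpow_def_of_ne_zero hne]
    have : Complex.exp (Complex.log (1 - z) * κ) * Complex.exp (-(a - κ * z)) =
        Complex.exp w * Complex.exp (-a) := by
      rw [← Complex.exp_add, ← Complex.exp_add, hw]
      congr 1
      rw [← sub_eq_add_neg]; ring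
    linear_combination (1 + a + T) * this
  have hea : ‖Complex.exp (-a)‖ ≤ Real.exp B := by
    refine (Complex.norm_exp_le_exp_norm _).trans ?_
    rw [norm_neg]; exact Real.exp_le_exp.2 ha
  have hX : ‖(1 + a + T) * Complex.exp (-a) - 1‖ ≤
      (Real.exp B * (1 + B) + 1 + Real.exp B) * (‖a‖ ^ 2 + ‖T‖) := by
    have e2 : (1 + a + T) * Complex.exp (-a) - 1 =
      (Complex.exp (-a) - 1 - (-a)) * (1 + a) - a ^ 2 + T * Complex.exp (-a) := by ring
    have h1 : ‖Complex.exp (-a) - 1 - (-a)‖ ≤ ‖a‖ ^ 2 * Real.exp B := by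
      refine (norm_exp_sub_one_sub_le' _).trans ?_
      rw [norm_neg]
      gcongr
    have h2 : ‖1 + a‖ ≤ 1 + B := (norm_add_le _ _).trans (by simpa using ha)
    rw [e2]
    calc _ ≤ ‖Complex.exp (-a) - 1 - (-a)‖ * ‖1 + a‖ + ‖a‖ ^ 2 + ‖T‖ * ‖Complex.exp (-a)‖ := by
            refine (norm_add_le _ _).trans ?_
            rw [norm_mul T]
            gcongr
            refine (norm_sub_le _ _).trans ?_
            rw [norm_mul, norm_pow]
      _ ≤ (‖a‖ ^ 2 * Real.exp B) * (1 + B) + ‖a‖ ^ 2 + ‖T‖ * Real.exp B := by gcongr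
      _ ≤ _ := by
          have := Real.exp_pos B
          have hT := norm_nonneg T
          nlinarith [mul_nonneg (sq_nonneg ‖a‖) this.le, mul_nonneg hT this.le, mul_nonneg (mul_nonneg hT this.le) hB]
  have hw1 : ‖Complex.exp w‖ ≤ Real.exp ‖κ‖ :=
    (Complex.norm_exp_le_exp_norm _).trans (Real.exp_le_exp.2 hwk)
  have hw2 : ‖Complex.exp w - 1‖ ≤ ‖κ‖ * ‖z‖ ^ 2 * Real.exp ‖κ‖ := by
    refine (norm_exp_sub_one_le' _).trans ?_
    gcongr
  rw [e1]
  have e3 : Complex.exp w * ((1 + a + T) * Complex.exp (-a)) - 1 =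
    Complex.exp w * ((1 + a + T) * Complex.exp (-a) - 1) + (Complex.exp w - 1) := by ring
  rw [e3]
  have hp1 : 0 ≤ Real.exp ‖κ‖ * (Real.exp B * (1 + B) + 1 + Real.exp B) := by positivity
  have hp2 : 0 ≤ ‖κ‖ * Real.exp ‖κ‖ := by positivity
  calc _ ≤ ‖Complex.exp w‖ * ‖(1 + a + T) * Complex.exp (-a) - 1‖ + ‖Complex.exp w - 1‖ := by
          refine (norm_add_le _ _).trans ?_
          rw [norm_mul]
    _ ≤ Real.exp ‖κ‖ * ((Real.exp B * (1 + B) + 1 + Real.exp B) * (‖a‖ ^ 2 + ‖T‖)) +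
          ‖κ‖ * ‖z‖ ^ 2 * Real.exp ‖κ‖ := by gcongr
    _ ≤ _ := by
        nlinarith [mul_nonneg hp1 (sq_nonneg ‖z‖), mul_nonneg hp2 (sq_nonneg ‖a‖), mul_nonneg hp2 (norm_nonneg T)]

/-- `n^{-s}` -/
noncomputable def tw (n : ℕ) (s : ℝ) : ℂ := (n : ℂ) ^ (-(s : ℂ))

lemma tw_zero (n : ℕ) : tw n 0 = 1 := by simp [tw]

lemma tw_norm_le {n : ℕ} (hn : 1 ≤ n) {s : ℝ} (hs : 0 ≤ s) : ‖tw n s‖ ≤ 1 := by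
  rw [tw, Complex.norm_natCast_cpow_of_pos hn]
  exact Real.rpow_le_one_of_one_le_of_nonpos (by exact_mod_cast hn) (by simpa using hs)

lemma tw_pow (p r : ℕ) (s : ℝ) : tw (p ^ r) s = tw p s ^ r := by
  rw [tw, tw]
  push_cast
  induction r with
  | zero => simp
  | succ r ih =>
    rw [pow_succ, pow_succ, ← ih]
    have := Complex.natCast_mul_natCast_cpow (p ^ r) p (-(s : ℂ))
    push_cast at this
    exact this

lemma tw_mul (m n : ℕ) (s : ℝ) : tw (m * n) s = tw m s * tw n s := by
  rw [tw, tw, tw]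
  push_cast
  exact Complex.natCast_mul_natCast_cpow m n _

lemma tw_tendsto {n : ℕ} (hn : n ≠ 0) : Tendsto (fun s => tw n s) (nhdsWithin 0 (Set.Ioi 0)) (nhds 1) := by
  have : Continuous (fun s : ℝ => tw n s) := by
    unfold tw
    refine Continuous.const_cpow (by fun_prop) (Or.inl (by exact_mod_cast hn))
  have h := this.tendsto 0
  rw [tw_zero] at h
  exact h.mono_left nhdsWithin_le_nhds

/-- Euler factor at `s` -/
noncomputable def Ep (f : ℕ → ℂ) (p : ℕ) (s : ℝ) : ℂ := ∑' r, f (p ^ r) * tw p s ^ r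

noncomputable def eps (f : ℕ → ℂ) (κ : ℂ) (s : ℝ) (p : ℕ) : ℂ :=
  if p.Prime then (1 - tw p s / p) ^ κ * Ep f p s * Complex.exp (-(apr f κ p * tw p s)) - 1 else 0

noncomputable def bnd (f : ℕ → ℂ) (p : ℕ) : ℝ :=
  (if p.Prime then ‖f p‖ ^ 2 else 0) + ((p : ℝ) ^ 2)⁻¹ + (if p.Prime then FHyp.tail f p else 0)

namespace FHyp
variable {κ : ℂ} {β K D : ℝ} {f : ℕ → ℂ}

lemma sum_sq_le (H : FHyp κ β K D f) (S : Finset ℕ) (hS : ∀ p ∈ S, p.Prime) :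
    ∑ p ∈ S, ‖f p‖ ^ 2 ≤ 2 * K := by
  have := H.B1 S 1 hS
  simp only [sum_range_one, zero_add, pow_one] at this
  calc _ ≤ ∑ p ∈ S, 2 * (‖f p‖ * Real.log p * ‖f p‖) := by
        refine sum_le_sum fun p hp => ?_
        have := one_lt_two_log (hS p hp)
        nlinarith [sq_nonneg ‖f p‖]
    _ = 2 * ∑ p ∈ S, ‖f p‖ * Real.log p * ‖f p‖ := by rw [mul_sum]
    _ ≤ _ := by linarith

lemma fp_le (H : FHyp κ β K D f) {p : ℕ} (hp : p.Prime) : ‖f p‖ ≤ 2 * K + 1 := by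
  have := H.sum_sq_le {p} (by simpa using hp)
  simp only [sum_singleton] at this
  nlinarith [sq_nonneg (‖f p‖ - 1), H.K0]

lemma bnd_summable (H : FHyp κ β K D f) : Summable (bnd f) := by
  refine Summable.add (Summable.add ?_ (Real.summable_nat_pow_inv.2 (by norm_num))) ?_
  · refine summable_of_sum_range_le (c := 2 * K) (fun n => by split_ifs <;> positivity) fun N => ?_
    rw [← sum_filter]
    exact H.sum_sq_le _ fun p hp => (mem_filter.1 hp).2
  · refine summable_of_sum_range_le (c := K) (fun n => by split_ifs; exacts [tail_nonneg _, le_rfl]) fun N => ?_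
    rw [← sum_filter]
    exact H.sum_tail_le _ fun p hp => (mem_filter.1 hp).2

lemma Ep_bound (H : FHyp κ β K D f) {p : ℕ} (hp : p.Prime) {s : ℝ} (hs : 0 ≤ s) (r : ℕ) :
    ‖f (p ^ r) * tw p s ^ r‖ ≤ ‖f (p ^ r)‖ := by
  rw [norm_mul, norm_pow]
  exact mul_le_of_le_one_right (norm_nonneg _) (pow_le_one₀ (norm_nonneg _) (tw_norm_le hp.one_lt.le hs))

lemma Ep_summable (H : FHyp κ β K D f) {p : ℕ} (hp : p.Prime) {s : ℝ} (hs : 0 ≤ s) :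
    Summable fun r => f (p ^ r) * tw p s ^ r :=
  Summable.of_norm_bounded (H.summable_pow hp) (H.Ep_bound hp hs)

lemma Ep_eq (H : FHyp κ β K D f) {p : ℕ} (hp : p.Prime) {s : ℝ} (hs : 0 ≤ s) :
    ∃ T, Ep f p s = 1 + f p * tw p s + T ∧ ‖T‖ ≤ tail f p := by
  refine ⟨∑' r, f (p ^ (r + 2)) * tw p s ^ (r + 2), ?_, ?_⟩
  · rw [Ep, ← (H.Ep_summable hp hs).sum_add_tsum_nat_add 2]
    simp [sum_range_succ, H.one]
  · refine tsum_of_norm_bounded (H.summable_tail hp).hasSum fun r => H.Ep_bound hp hs (r + 2)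

lemma eps_bound (H : FHyp κ β K D f) : ∃ C : ℝ, ∀ s : ℝ, 0 ≤ s → ∀ p, ‖eps f κ s p‖ ≤ C * bnd f p := by
  have hB : 0 ≤ 2 * K + 1 := by linarith [H.K0]
  set B := 2 * K + 1
  refine ⟨Real.exp ‖κ‖ * (Real.exp B * (1 + B) + 1 + Real.exp B) + ‖κ‖ * Real.exp ‖κ‖, fun s hs p => ?_⟩
  rw [eps, bnd]
  split_ifs with hp
  · obtain ⟨T, hT, hTn⟩ := H.Ep_eq hp hs
    have htn := tw_norm_le hp.one_lt.le hs
    have hp2 : (2:ℝ) ≤ p := by exact_mod_cast hp.two_le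
    have hp0 : (p:ℂ) ≠ 0 := by exact_mod_cast hp.ne_zero
    have hz : ‖tw p s / p‖ ≤ (p:ℝ)⁻¹ := by
      rw [norm_div, Complex.norm_natCast, div_eq_mul_inv]
      exact mul_le_of_le_one_left (by positivity) htn
    have ha : ‖f p * tw p s‖ ≤ ‖f p‖ := by
      rw [norm_mul]; exact mul_le_of_le_one_right (norm_nonneg _) htn
    have hz2 : ‖tw p s / p‖ ≤ 1 / 2 := hz.trans (by rw [one_div]; gcongr)
    have key := local_bound κ B hB (tw p s / p) (f p * tw p s) T hz2 (ha.trans (H.fp_le hp))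
    have e : apr f κ p * tw p s = f p * tw p s - κ * (tw p s / p) := by
      rw [apr, if_pos hp]; ring
    rw [e, hT]
    refine key.trans ?_
    have : ((p:ℝ) ^ 2)⁻¹ = ((p:ℝ)⁻¹) ^ 2 := by rw [inv_pow]
    rw [this]
    gcongr
  · simp only [norm_zero]
    positivity

lemma Ep_tendsto (H : FHyp κ β K D f) {p : ℕ} (hp : p.Prime) :
    Tendsto (fun s => Ep f p s) (nhdsWithin 0 (Set.Ioi 0)) (nhds (Ep f p 0)) := by
  refine tendsto_tsum_of_dominated_convergence (H.summable_pow hp) (fun r => ?_) ?_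
  · rw [tw_zero]
    exact ((tw_tendsto hp.ne_zero).pow r).const_mul _
  · filter_upwards [self_mem_nhdsWithin] with s hs r
    exact H.Ep_bound hp (le_of_lt hs) r

lemma one_sub_slit {p : ℕ} (hp : p.Prime) : (1 - 1 / (p:ℂ)) ∈ Complex.slitPlane := by
  have hp2 : (2:ℝ) ≤ p := by exact_mod_cast hp.two_le
  have h : (1:ℝ) / p ≤ 1 / 2 := by gcongr
  have : (1 - 1 / (p:ℂ)) = ((1 - 1 / (p:ℝ) : ℝ) : ℂ) := by push_cast; rfl
  rw [this, Complex.ofReal_mem_slitPlane]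
  linarith

lemma eps_tendsto (H : FHyp κ β K D f) (p : ℕ) :
    Tendsto (fun s => eps f κ s p) (nhdsWithin 0 (Set.Ioi 0)) (nhds (eps f κ 0 p)) := by
  unfold eps
  split_ifs with hp
  · have ht := tw_tendsto hp.ne_zero
    rw [tw_zero]
    refine Tendsto.sub_const (Tendsto.mul (Tendsto.mul ?_ (H.Ep_tendsto hp)) ?_) _
    · have h2 : Tendsto (fun s => 1 - tw p s / (p:ℂ)) (nhdsWithin 0 (Set.Ioi 0)) (nhds (1 - 1 / (p:ℂ))) :=
        tendsto_const_nhds.sub (ht.div_const _)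
      exact h2.cpow tendsto_const_nhds (one_sub_slit hp)
    · exact (Complex.continuous_exp.tendsto _).comp (ht.const_mul _).neg
  · exact tendsto_const_nhds

noncomputable def Q (f : ℕ → ℂ) (κ : ℂ) (s : ℝ) : ℂ := ∏' p, (1 + eps f κ s p)

lemma Q_tendsto (H : FHyp κ β K D f) :
    Tendsto (Q f κ) (nhdsWithin 0 (Set.Ioi 0)) (nhds (Q f κ 0)) := by
  obtain ⟨C, hC⟩ := H.eps_bound
  refine tendsto_tprod_one_add_of_dominated_convergence (H.bnd_summable.mul_left C) H.eps_tendsto ?_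
  filter_upwards [self_mem_nhdsWithin] with s hs
  exact hC s (le_of_lt hs)

noncomputable def GN (f : ℕ → ℂ) (κ : ℂ) (s : ℝ) (N : ℕ) : ℂ :=
  ∏ p ∈ N.primesBelow, (1 - tw p s / p) ^ κ * Ep f p s

lemma GN_tendsto (H : FHyp κ β K D f) {s : ℝ} (hs : 0 ≤ s) {S : ℂ}
    (hS : Tendsto (fun N => ∑ n ∈ range N, apr f κ n * tw n s) atTop (nhds S)) :
    Tendsto (GN f κ s) atTop (nhds (Q f κ s * Complex.exp S)) := by
  obtain ⟨C, hC⟩ := H.eps_bound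
  have hm : Multipliable fun p => 1 + eps f κ s p := by
    refine multipliable_one_add_of_summable ?_
    exact (H.bnd_summable.mul_left C).of_nonneg_of_le (fun _ => norm_nonneg _) (hC s hs)
  refine (hm.hasProd.tendsto_prod_nat.mul ((Complex.continuous_exp.tendsto _).comp hS)).congr fun N => ?_
  simp only [Function.comp]
  rw [Complex.exp_sum, ← prod_mul_distrib, GN, Nat.primesBelow, prod_filter]
  refine prod_congr rfl fun p _ => ?_
  rw [eps]
  split_ifs with hp
  · rw [add_sub_cancel, mul_assoc, ← Complex.exp_add]
    simp
  · simp [apr, hp]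

end FHyp

namespace FHyp
variable {κ : ℂ} {β K D : ℝ} {f : ℕ → ℂ}

lemma lseries_bigO (H : FHyp κ β K D f) {s : ℝ} (hs : 0 < s) :
    (fun n : ℕ => ∑ k ∈ Icc 1 n, ‖f k‖) =O[atTop] fun n : ℕ => (n : ℝ) ^ (s / 2) := by
  have ho : (fun n : ℕ => Real.log n ^ β) =O[atTop] fun n : ℕ => (n : ℝ) ^ (s / 2) :=
    ((isLittleO_log_rpow_rpow_atTop β (show 0 < s / 2 by positivity)).comp_tendsto
      tendsto_natCast_atTop_atTop).isBigO
  refine Asymptotics.IsBigO.trans ?_ ho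
  refine Asymptotics.IsBigO.of_bound (K * Real.exp K) ?_
  filter_upwards [eventually_ge_atTop 2] with n hn
  have hn2 : (2:ℝ) ≤ n := by exact_mod_cast hn
  have := H.absSum_le hn2
  rw [Nat.floor_natCast] at this
  rw [Real.norm_of_nonneg (sum_nonneg fun _ _ => norm_nonneg _)]
  refine this.trans ?_
  have hK := H.K0
  gcongr
  exact Real.le_norm_self _

lemma lseries_summable (H : FHyp κ β K D f) {s : ℝ} (hs : 0 < s) : LSeriesSummable f s :=
  LSeriesSummable_of_sum_norm_bigO (H.lseries_bigO hs) (by positivity) (by simp; linarith)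

lemma term_eq (F : ℕ → ℂ) (h0 : F 0 = 0) (s : ℝ) (n : ℕ) : LSeries.term F s n = F n * tw n s :=
  LSeries.term_def₀ h0 _ _

lemma apr_summable (H : FHyp κ β K D f) {s : ℝ} (hs : 0 < s) : LSeriesSummable (apr f κ) s := by
  have h1 := (H.lseries_summable hs).norm
  have h2 : Summable fun n : ℕ => ‖κ‖ * (1 / (n:ℝ) ^ (1 + s)) :=
    (Real.summable_one_div_nat_rpow.2 (by linarith)).mul_left _
  refine Summable.of_norm_bounded (h1.add h2) fun n => ?_
  rw [term_eq _ (by simp [apr, Nat.not_prime_zero]), term_eq _ H.zero, apr]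
  split_ifs with hp
  · rw [sub_mul]
    refine (norm_sub_le _ _).trans ?_
    gcongr
    rw [norm_mul, norm_div, tw, Complex.norm_natCast_cpow_of_pos hp.pos, Complex.norm_natCast]
    have hn : (0:ℝ) < n := by exact_mod_cast hp.pos
    rw [Real.rpow_add hn, Real.rpow_one]
    simp only [Complex.neg_re, Complex.ofReal_re, Real.rpow_neg hn.le]
    apply le_of_eq
    field_simp
  · simp only [zero_mul, norm_zero]; positivity

lemma apr_sum_tendsto (H : FHyp κ β K D f) {s : ℝ} (hs : 0 < s) :
    Tendsto (fun N => ∑ n ∈ range N, apr f κ n * tw n s) atTop (nhds (LSeries (apr f κ) s)) := by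
  have := (H.apr_summable hs).hasSum.tendsto_sum_nat
  refine this.congr fun N => sum_congr rfl fun n _ => term_eq _ (by simp [apr, Nat.not_prime_zero]) _ _

lemma Mu_apr {S : ℂ} (hS : Tendsto (fun N => ∑ n ∈ range N, apr f κ n) atTop (nhds S)) :
    Tendsto (fun u : ℝ => Mu (apr f κ) u) atTop (nhds S) := by
  have h1 : Tendsto (fun u : ℝ => ⌊Real.exp u⌋₊ + 1) atTop atTop :=
    (tendsto_add_atTop_nat 1).comp (tendsto_nat_floor_atTop.comp Real.tendsto_exp_atTop)
  refine (hS.comp h1).congr fun u => ?_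
  simp only [Function.comp, Mu]
  rw [range_eq_Ico, sum_eq_sum_Ico_succ_bot (by omega)]
  simp only [apr, Nat.not_prime_zero, if_false, zero_add]
  refine sum_congr ?_ fun _ _ => rfl
  ext; simp [Nat.lt_succ_iff]

lemma apr_lseries (H : FHyp κ β K D f) {S : ℂ}
    (hS : Tendsto (fun N => ∑ n ∈ range N, apr f κ n) atTop (nhds S)) :
    Tendsto (fun s : ℝ => LSeries (apr f κ) s) (nhdsWithin 0 (Set.Ioi 0)) (nhds S) := by
  have := abelian (apr f κ) 0 S (by simp) (fun s hs => H.apr_summable hs) (by simpa using Mu_apr hS)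
  simpa using this

lemma euler_f (H : FHyp κ β K D f) {s : ℝ} (hs : 0 < s) :
    Tendsto (fun N : ℕ => ∏ p ∈ N.primesBelow, Ep f p s) atTop (nhds (LSeries f s)) := by
  have hsum := (H.lseries_summable hs).norm
  simp only [LSeriesSummable, term_eq _ H.zero] at hsum
  have := EulerProduct.eulerProduct (f := fun n => f n * tw n s) (by simp [H.one, tw])
    (fun {m n} h => by rw [H.mul h, tw_mul]; ring) hsum (by simp [H.zero])
  have e : LSeries f s = ∑' n, f n * tw n s := tsum_congr fun n => term_eq _ H.zero _ _
  rw [e]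
  refine this.congr fun N => prod_congr rfl fun p _ => ?_
  rw [Ep]
  exact tsum_congr fun r => by rw [tw_pow]

lemma prod_cpow {ι : Type*} (S : Finset ι) (r : ι → ℝ) (hr : ∀ i ∈ S, 0 ≤ r i) (κ : ℂ) :
    ∏ i ∈ S, ((r i : ℂ)) ^ κ = ((∏ i ∈ S, r i : ℝ) : ℂ) ^ κ := by
  classical
  induction S using Finset.induction_on with
  | empty => simp
  | insert a S ha ih =>
    rw [prod_insert ha, prod_insert ha, ih fun i hi => hr i (mem_insert_of_mem hi), Complex.ofReal_mul,
      Complex.mul_cpow_ofReal_nonneg (hr a (mem_insert_self _ _))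
        (prod_nonneg fun i hi => hr i (mem_insert_of_mem hi))]

lemma zeta_real {s : ℝ} (hs : 0 < s) (κ : ℂ) : ∃ z : ℝ, 0 < z ∧ riemannZeta (1 + s) = z ∧
    Tendsto (fun N : ℕ => ∏ p ∈ N.primesBelow, (1 - tw p s / p) ^ κ) atTop (nhds (((z : ℝ) : ℂ) ^ (-κ))) := by
  have h := riemannZeta_eulerProduct (s := 1 + s) (by simp; linarith)
  set r : ℕ → ℝ := fun p => 1 - (p : ℝ) ^ (-(1 + s)) with hr
  have er : ∀ p : ℕ, 1 - (p : ℂ) ^ (-(1 + (s : ℂ))) = (r p : ℂ) := fun p => by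
    rw [hr]; push_cast
    rw [Complex.ofReal_cpow (by positivity)]
    push_cast; rfl
  have er2 : ∀ p : ℕ, p.Prime → 1 - tw p s / p = (r p : ℂ) := fun p hp => by
    rw [← er]
    have hp0 : (p:ℂ) ≠ 0 := by exact_mod_cast hp.ne_zero
    rw [show -(1 + (s:ℂ)) = -(s:ℂ) - 1 by ring, Complex.cpow_sub _ _ hp0, Complex.cpow_one, tw]
  have hr01 : ∀ p : ℕ, p.Prime → 0 < r p ∧ r p ≤ 1 := fun p hp => by
    have hp1 : (1:ℝ) < p := by exact_mod_cast hp.one_lt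
    have h1 := Real.rpow_lt_one_of_one_lt_of_neg hp1 (show -(1 + s) < 0 by linarith)
    have h2 : 0 < (p:ℝ) ^ (-(1 + s)) := by positivity
    constructor <;> simp only [hr] <;> linarith
  have h' : Tendsto (fun N : ℕ => ((∏ p ∈ N.primesBelow, (r p)⁻¹ : ℝ) : ℂ)) atTop (nhds (riemannZeta (1 + s))) := by
    refine h.congr fun N => ?_
    push_cast
    exact prod_congr rfl fun p _ => by rw [er]
  have hre := (Complex.continuous_re.tendsto _).comp h'
  have him := (Complex.continuous_im.tendsto _).comp h'
  simp only [Function.comp_def, Complex.ofReal_re, Complex.ofReal_im] at hre him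
  have him0 : (riemannZeta (1 + s)).im = 0 := tendsto_nhds_unique him tendsto_const_nhds
  have hz1 : 1 ≤ (riemannZeta (1 + s)).re := by
    refine ge_of_tendsto' hre fun N => ?_
    rw [← prod_const_one (s := N.primesBelow) (M := ℝ)]
    refine prod_le_prod (fun _ _ => zero_le_one) fun p hp => ?_
    obtain ⟨a, b⟩ := hr01 p (Nat.prime_of_mem_primesBelow hp)
    exact (one_le_inv₀ a).2 b
  set z := (riemannZeta (1 + s)).re with hz
  have hzz : riemannZeta (1 + s) = z := Complex.ext (by simp [hz]) (by simp [him0])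
  refine ⟨z, by linarith, hzz, ?_⟩
  have hinv : Tendsto (fun N : ℕ => ((∏ p ∈ N.primesBelow, r p : ℝ) : ℂ)) atTop (nhds ((z⁻¹ : ℝ) : ℂ)) := by
    refine (Complex.continuous_ofReal.tendsto _).comp ?_
    refine (hre.inv₀ (by linarith)).congr fun N => ?_
    rw [prod_inv_distrib, inv_inv]
  have hsl : ((z⁻¹ : ℝ) : ℂ) ∈ Complex.slitPlane := by
    rw [Complex.ofReal_mem_slitPlane]; positivity
  have h3 := hinv.cpow (tendsto_const_nhds (x := κ)) hsl
  have e4 : ((z⁻¹ : ℝ) : ℂ) ^ κ = (z : ℂ) ^ (-κ) := by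
    rw [Complex.ofReal_inv, Complex.inv_cpow _ _ (by rw [Complex.arg_ofReal_of_nonneg (by linarith)]; exact Real.pi_pos.ne), Complex.cpow_neg]
  rw [e4] at h3
  refine h3.congr fun N => ?_
  rw [← prod_cpow _ _ fun p hp => (hr01 p (Nat.prime_of_mem_primesBelow hp)).1.le]
  exact prod_congr rfl fun p hp => by rw [er2 p (Nat.prime_of_mem_primesBelow hp)]

lemma key_id (H : FHyp κ β K D f) {s : ℝ} (hs : 0 < s) :
    (s : ℂ) ^ κ * LSeries f s =
      ((s : ℂ) * riemannZeta (1 + s)) ^ κ * (Q f κ s * Complex.exp (LSeries (apr f κ) s)) := by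
  obtain ⟨z, hz0, hz, hlim⟩ := zeta_real hs κ
  have h1 := hlim.mul (H.euler_f hs)
  have h2 := H.GN_tendsto hs.le (H.apr_sum_tendsto hs)
  have h3 := tendsto_nhds_unique h2 (h1.congr fun N => by rw [GN, prod_mul_distrib])
  rw [h3, hz, Complex.mul_cpow_ofReal_nonneg hs.le hz0.le, Complex.cpow_neg]
  have : (z : ℂ) ^ κ ≠ 0 := by
    rw [Complex.cpow_ne_zero_iff]; left; exact_mod_cast hz0.ne'
  field_simp

lemma zeta_lim : Tendsto (fun s : ℝ => (s : ℂ) * riemannZeta (1 + s)) (nhdsWithin 0 (Set.Ioi 0)) (nhds 1) := by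
  have h : Tendsto (fun s : ℝ => 1 + (s : ℂ)) (nhdsWithin 0 (Set.Ioi 0)) (nhdsWithin 1 {1}ᶜ) := by
    refine tendsto_nhdsWithin_iff.2 ⟨?_, ?_⟩
    · have : Continuous fun s : ℝ => 1 + (s : ℂ) := by fun_prop
      have h := this.tendsto 0
      simp only [Complex.ofReal_zero, add_zero] at h
      exact h.mono_left nhdsWithin_le_nhds
    · filter_upwards [self_mem_nhdsWithin] with s hs
      simp only [Set.mem_Ioi] at hs
      simp [hs.ne']
  refine (riemannZeta_residue_one.comp h).congr fun s => by simp

lemma core (H : FHyp κ β K D f) (hκ : -1 < κ.re) (hβ : β < κ.re + 1) :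
    ∃ P : ℂ, Tendsto (fun N : ℕ => ∏ p ∈ N.primesBelow, (1 - 1 / (p : ℂ)) ^ κ * ∑' r, f (p ^ r)) atTop (nhds P) ∧
      ∀ x : ℝ, 2 ≤ x → ‖∑ n ∈ Icc 1 ⌊x⌋₊, f n - (Complex.Gamma (κ + 1))⁻¹ * P * (Real.log x : ℂ) ^ κ‖ ≤
      ((2 * K + 1 + ‖κ‖) * (K * Real.exp K)) * (1 + ‖κ + 1‖ / (κ.re + 1 - β)) * D
        * Real.log x ^ (β - 1) := by
  obtain ⟨c, hc⟩ := H.asymp hβ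
  obtain ⟨S, hS⟩ := H.apr_conv
  have hG0 : Tendsto (GN f κ 0) atTop (nhds (Q f κ 0 * Complex.exp S)) :=
    H.GN_tendsto le_rfl (by simpa [tw_zero] using hS)
  set P := Q f κ 0 * Complex.exp S with hP
  have hGam : Complex.Gamma (κ + 1) ≠ 0 := Complex.Gamma_ne_zero_of_re_pos (by simp; linarith)
  set E := ((2 * K + 1 + ‖κ‖) * (K * Real.exp K)) * (1 + ‖κ + 1‖ / (κ.re + 1 - β)) * D with hE
  have hMu : Tendsto (fun u : ℝ => Mu f u * (u : ℂ) ^ (-κ)) atTop (nhds c) := by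
    rw [tendsto_iff_norm_sub_tendsto_zero]
    have hz : Tendsto (fun u : ℝ => E * u ^ (-(κ.re + 1 - β))) atTop (nhds 0) := by
      simpa using (tendsto_rpow_neg_atTop (show 0 < κ.re + 1 - β by linarith)).const_mul E
    refine squeeze_zero' (Eventually.of_forall fun _ => norm_nonneg _) ?_ hz
    filter_upwards [eventually_ge_atTop 1] with u hu
    have hu0 : 0 < u := by linarith
    have h2 : 2 ≤ Real.exp u := by linarith [Real.add_one_le_exp u]
    have h3 := hc _ h2
    rw [Real.log_exp] at h3
    have huC : (u : ℂ) ≠ 0 := by exact_mod_cast hu0.ne'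
    have e1 : Mu f u * (u : ℂ) ^ (-κ) - c = (Mu f u - c * (u : ℂ) ^ κ) * (u : ℂ) ^ (-κ) := by
      rw [sub_mul, mul_assoc, ← Complex.cpow_add _ _ huC]; simp
    rw [e1, norm_mul, Complex.norm_cpow_eq_rpow_re_of_pos hu0]
    calc _ ≤ E * u ^ (β - 1) * u ^ (-κ).re := by
          gcongr
          exact h3
      _ = _ := by
          rw [mul_assoc, ← Real.rpow_add hu0]
          congr 2
          simp; ring
  have hab := abelian f κ c hκ (fun s hs => H.lseries_summable hs) hMu
  have hlim2 : Tendsto (fun s : ℝ => (s : ℂ) ^ κ * LSeries f s) (nhdsWithin 0 (Set.Ioi 0)) (nhds P) := by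
    have h1 := (zeta_lim.cpow (tendsto_const_nhds (x := κ)) (by simp)).mul
      (H.Q_tendsto.mul ((Complex.continuous_exp.tendsto _).comp (H.apr_lseries hS)))
    rw [Complex.one_cpow, one_mul] at h1
    refine h1.congr' ?_
    filter_upwards [self_mem_nhdsWithin] with s hs
    rw [H.key_id hs]; rfl
  have hcP : c * Complex.Gamma (κ + 1) = P := tendsto_nhds_unique hab hlim2
  refine ⟨P, ?_, ?_⟩
  · refine hG0.congr fun N => prod_congr rfl fun p _ => ?_
    simp [tw_zero, Ep]
  · have : (Complex.Gamma (κ + 1))⁻¹ * P = c := by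
      rw [← hcP]; field_simp
    rw [this]
    exact hc

end FHyp

/-- the twisted function -/
noncomputable def fq (g : ℕ → ℂ) (Q n : ℕ) : ℂ := if Nat.Coprime n Q then g n / n else 0

lemma fq_norm_le (g : ℕ → ℂ) (Q n : ℕ) : ‖fq g Q n‖ ≤ ‖g n‖ / n := by
  rw [fq]; split_ifs
  · simp
  · simp; positivity

lemma enn_sum_bound (F : ℕ → ℕ → ℝ) (hF : ∀ p r, 0 ≤ F p r) (Φ : Nat.Primes → ℝ≥0∞)
    (h : ∀ (p : Nat.Primes) R, ∑ r ∈ range R, ENNReal.ofReal (F p r) ≤ Φ p) (hT : ∑' p, Φ p ≠ ⊤)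
    (S : Finset ℕ) (R : ℕ) (hS : ∀ p ∈ S, p.Prime) :
    ∑ p ∈ S, ∑ r ∈ range R, F p r ≤ (∑' p, Φ p).toReal := by
  rw [← ENNReal.ofReal_le_iff_le_toReal hT,
    ENNReal.ofReal_sum_of_nonneg fun p _ => sum_nonneg fun r _ => hF p r]
  rw [← Finset.sum_subtype_of_mem (p := Nat.Prime) _ hS]
  refine le_trans (sum_le_sum fun p _ => ?_) (ENNReal.sum_le_tsum (f := Φ) _)
  rw [ENNReal.ofReal_sum_of_nonneg fun r _ => hF p r]
  exact h p R

lemma enn_div (a : ℂ) (n : ℕ) (hn : n ≠ 0) : ENNReal.ofReal (‖a‖ / n) = (‖a‖₊ : ℝ≥0∞) / (n : ℝ≥0∞) := by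
  rw [ENNReal.ofReal_div_of_pos (by positivity), ofReal_norm, ENNReal.ofReal_natCast]
  rfl

lemma condB_bounds {g : ℕ → ℂ} (hB : CondB g) : ∃ K : ℝ, 0 ≤ K ∧
    (∀ (S : Finset ℕ) (R : ℕ), (∀ p ∈ S, p.Prime) →
      ∑ p ∈ S, ∑ r ∈ range R, ‖g p‖ / p * Real.log p * (‖g (p ^ (r + 1))‖ / (p ^ (r + 1) : ℕ)) ≤ K) ∧
    (∀ (S : Finset ℕ) (R : ℕ), (∀ p ∈ S, p.Prime) →
      ∑ p ∈ S, ∑ r ∈ range R, ‖g (p ^ (r + 2))‖ / (p ^ (r + 2) : ℕ) * (((r : ℝ) + 2) * Real.log p) ≤ K) := by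
  obtain ⟨h1, h2⟩ := ENNReal.add_lt_top.1 hB
  have a1 : ∃ K : ℝ, 0 ≤ K ∧ ∀ (S : Finset ℕ) (R : ℕ), (∀ p ∈ S, p.Prime) →
      ∑ p ∈ S, ∑ r ∈ range R, ‖g p‖ / p * Real.log p * (‖g (p ^ (r + 1))‖ / (p ^ (r + 1) : ℕ)) ≤ K := by
    refine ⟨_, ENNReal.toReal_nonneg, fun S R hS => enn_sum_bound _ (fun p r => ?_) _ (fun p R => ?_) h1.ne S R hS⟩
    · have := Real.log_natCast_nonneg p
      positivity
    · have hl := Real.log_natCast_nonneg (p : ℕ)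
      have hp := p.2.ne_zero
      have e : ∀ r, ENNReal.ofReal (‖g p‖ / (p:ℕ) * Real.log (p:ℕ) * (‖g ((p:ℕ) ^ (r + 1))‖ / ((p:ℕ) ^ (r + 1) : ℕ)))
        = ((‖g (p : ℕ)‖₊ : ℝ≥0∞) * ENNReal.ofReal (Real.log (p : ℕ)) / ((p : ℕ) : ℝ≥0∞)) *
          ((‖g ((p : ℕ) ^ (r + 1))‖₊ : ℝ≥0∞) / (((p : ℕ) ^ (r + 1) : ℕ) : ℝ≥0∞)) := fun r => by
        rw [ENNReal.ofReal_mul (by positivity), ENNReal.ofReal_mul (by positivity), enn_div _ _ hp,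
          enn_div _ _ (pow_ne_zero _ hp)]
        congr 1
        rw [div_eq_mul_inv, div_eq_mul_inv]; ring
      rw [sum_congr rfl fun r _ => e r, ← mul_sum]
      gcongr
      exact ENNReal.sum_le_tsum _
  have a2 : ∃ K : ℝ, 0 ≤ K ∧ ∀ (S : Finset ℕ) (R : ℕ), (∀ p ∈ S, p.Prime) →
      ∑ p ∈ S, ∑ r ∈ range R, ‖g (p ^ (r + 2))‖ / (p ^ (r + 2) : ℕ) * (((r : ℝ) + 2) * Real.log p) ≤ K := by
    refine ⟨_, ENNReal.toReal_nonneg, fun S R hS => enn_sum_bound _ (fun p r => ?_) _ (fun p R => ?_) h2.ne S R hS⟩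
    · have := Real.log_natCast_nonneg p
      positivity
    · have hl := Real.log_natCast_nonneg (p : ℕ)
      have hp := p.2.ne_zero
      have e : ∀ r : ℕ, ENNReal.ofReal (‖g ((p:ℕ) ^ (r + 2))‖ / ((p:ℕ) ^ (r + 2) : ℕ) * (((r : ℝ) + 2) * Real.log (p:ℕ)))
        = (‖g ((p : ℕ) ^ (r + 2))‖₊ : ℝ≥0∞) *
          ENNReal.ofReal (Real.log ((p : ℕ) ^ (r + 2) : ℕ)) /
          (((p : ℕ) ^ (r + 2) : ℕ) : ℝ≥0∞) := fun r => by
        rw [ENNReal.ofReal_mul (by positivity), enn_div _ _ (pow_ne_zero _ hp)]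
        have : Real.log ((p : ℕ) ^ (r + 2) : ℕ) = ((r : ℝ) + 2) * Real.log (p:ℕ) := by
          rw [Nat.cast_pow, Real.log_pow]; push_cast; ring
        rw [this, div_eq_mul_inv, div_eq_mul_inv]; ring
      rw [sum_congr rfl fun r _ => e r]
      exact ENNReal.sum_le_tsum _
  obtain ⟨K1, hK1, h1'⟩ := a1
  obtain ⟨K2, hK2, h2'⟩ := a2
  exact ⟨max K1 K2, le_max_of_le_left hK1, fun S R hS => (h1' S R hS).trans (le_max_left _ _),
    fun S R hS => (h2' S R hS).trans (le_max_right _ _)⟩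

lemma deltaq_ge (g : ℕ → ℂ) (q : ℤ) : 1 ≤ deltaq g q := by
  rw [deltaq]
  have : 0 ≤ ∑ p ∈ q.natAbs.primeFactors, ‖g p‖ * Real.log p / (p : ℝ) :=
    sum_nonneg fun p _ => by
      have := Real.log_natCast_nonneg p
      positivity
  linarith

lemma fq_hyp {g : ℕ → ℂ} {κ : ℂ} {β : ℝ} (hg : IsMult g) (hA : CondA g κ) (hB : CondB g) (hC : CondC g β) :
    ∃ K C : ℝ, ∀ q : ℤ, q ≠ 0 → FHyp κ β K (C * deltaq g q) (fq g q.natAbs) := by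
  obtain ⟨CA, hA⟩ := hA
  obtain ⟨K, hK0, hB1, hB2⟩ := condB_bounds hB
  obtain ⟨CC, hC⟩ := hC
  refine ⟨max K CC, max CA 1, fun q hq => ?_⟩
  have hδ := deltaq_ge g q
  set Q := q.natAbs with hQ
  have hQ0 : Q ≠ 0 := Int.natAbs_ne_zero.2 hq
  refine ⟨?_, ?_, ?_, ?_, ?_, ?_, ?_, le_max_of_le_left hK0, ?_⟩
  · simp [fq]
  · simp [fq, hg.1]
  · intro m n hmn
    rw [fq, fq, fq, hg.2 m n hmn]
    by_cases h1 : Nat.Coprime m Q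
    · by_cases h2 : Nat.Coprime n Q
      · rw [if_pos h1, if_pos h2, if_pos (Nat.Coprime.mul_left h1 h2), Nat.cast_mul, mul_div_mul_comm]
      · rw [if_neg h2, mul_zero, if_neg fun h => h2 (Nat.coprime_mul_iff_left.1 h).2]
    · rw [if_neg h1, zero_mul, if_neg fun h => h1 (Nat.coprime_mul_iff_left.1 h).1]
  · intro x hx
    have e : (∑ p ∈ primesLE x, fq g Q p * (Real.log p : ℂ)) - κ * (Real.log x : ℂ) =
        ((∑ p ∈ primesLE x, g p * (Real.log p : ℂ) / (p : ℂ)) - κ * (Real.log x : ℂ)) -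
        ∑ p ∈ (primesLE x).filter (fun p => p ∣ Q), g p * (Real.log p : ℂ) / (p : ℂ) := by
      rw [sum_filter, sub_right_comm, ← sum_sub_distrib]
      congr 1
      refine sum_congr rfl fun p hp => ?_
      have hp' : p.Prime := (mem_filter.1 hp).2
      rw [fq]
      by_cases h : p ∣ Q
      · rw [if_pos h, if_neg fun h' => (hp'.coprime_iff_not_dvd.1 h') h]; ring
      · rw [if_neg h, if_pos (hp'.coprime_iff_not_dvd.2 h)]; ring
    have h2 : ‖∑ p ∈ (primesLE x).filter (fun p => p ∣ Q), g p * (Real.log p : ℂ) / (p : ℂ)‖ ≤ deltaq g q - 1 := by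
      rw [deltaq, add_sub_cancel_left]
      refine (norm_sum_le _ _).trans ?_
      refine le_trans (sum_le_sum fun p _ => ?_) (sum_le_sum_of_subset_of_nonneg (s := (primesLE x).filter (fun p => p ∣ Q)) (f := fun p => ‖g p‖ * Real.log p / (p : ℝ)) ?_ ?_)
      · rw [norm_div, norm_mul, Complex.norm_natCast, Complex.norm_real, Real.norm_of_nonneg (Real.log_natCast_nonneg p)]
      · intro p hp
        simp only [primesLE, mem_filter] at hp
        exact Nat.mem_primeFactors.2 ⟨hp.1.2, hp.2, hQ0⟩
      · intro p _ _
        have := Real.log_natCast_nonneg p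
        positivity
    rw [e]
    refine (norm_sub_le _ _).trans ((add_le_add (hA x hx) h2).trans ?_)
    have h3 := le_max_left CA 1
    have h4 := le_max_right CA 1
    nlinarith
  · intro S R hS
    refine le_trans (sum_le_sum fun p _ => sum_le_sum fun r _ => ?_) ((hB1 S R hS).trans (le_max_left _ _))
    have := Real.log_natCast_nonneg p
    gcongr
    · exact fq_norm_le _ _ _
    · exact fq_norm_le _ _ _
  · intro S R hS
    refine le_trans (sum_le_sum fun p _ => sum_le_sum fun r _ => ?_) ((hB2 S R hS).trans (le_max_left _ _))
    have := Real.log_natCast_nonneg p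
    gcongr
    exact fq_norm_le _ _ _
  · intro x hx
    have hl : 0 < Real.log x := Real.log_pos (by linarith)
    calc _ ≤ ∏ p ∈ primesLE x, (1 + ‖g p‖ / (p : ℝ)) := by
          refine prod_le_prod (fun _ _ => by positivity) fun p _ => ?_
          gcongr
          exact fq_norm_le _ _ _
      _ ≤ _ := hC x hx
      _ ≤ _ := by
          gcongr
          exact le_max_right _ _
  · have h4 := le_max_right CA 1
    nlinarith

lemma totient_cpow {Q : ℕ} (hQ : Q ≠ 0) (κ : ℂ) :
    ∏ p ∈ Q.primeFactors, (1 - 1 / (p : ℂ)) ^ κ = ((Q.totient : ℂ) / (Q : ℂ)) ^ κ := by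
  have h := Nat.totient_eq_mul_prod_factors Q
  have e : ∀ p ∈ Q.primeFactors, (1 - 1 / (p : ℂ)) ^ κ = (((1 - 1 / (p:ℝ) : ℝ)) : ℂ) ^ κ := fun p _ => by
    push_cast; rfl
  rw [prod_congr rfl e, FHyp.prod_cpow]
  · congr 1
    have h' : (Q.totient : ℝ) = Q * ∏ p ∈ Q.primeFactors, (1 - 1 / (p:ℝ)) := by
      have : ((Q.totient : ℚ) : ℝ) = ((Q * ∏ p ∈ Q.primeFactors, (1 - (p:ℚ)⁻¹) : ℚ) : ℝ) := by rw [h]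
      push_cast at this
      simpa using this
    have hQ' : (Q : ℝ) ≠ 0 := by exact_mod_cast hQ
    have h2 : ∏ p ∈ Q.primeFactors, (1 - 1 / (p:ℝ)) = Q.totient / Q := by
      rw [h']; field_simp
    rw [h2]; push_cast; rfl
  · intro p hp
    have : (1:ℝ) ≤ p := by exact_mod_cast (Nat.prime_of_mem_primeFactors hp).one_lt.le
    have h3 : 1 / (p:ℝ) ≤ 1 := by rw [div_le_one (by linarith)]; exact this
    linarith

theorem stmt1 (g : ℕ → ℂ) (κ : ℂ) (β : ℝ) (hg : IsMult g)
    (hκ : κ.im ^ 2 < 2 * κ.re + 1)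
    (hA : CondA g κ) (hB : CondB g)
    (hβ0 : 0 ≤ β) (hβ : β < κ.re + 1) (hC : CondC g β) :
    ∃ C : ℝ, ∀ q : ℤ, q ≠ 0 →
      ∃ P : ℂ,
        Tendsto
          (fun N : ℕ =>
            ∏ p ∈ (Finset.range N).filter (fun p => Nat.Prime p ∧ ¬ (p : ℤ) ∣ q),
              eulerFactor g κ p)
          atTop (nhds P) ∧
        ∀ x : ℝ, 2 ≤ x →
          ‖Mgq g x q -
              (Complex.Gamma (κ + 1))⁻¹ *
                ((q.natAbs.totient : ℂ) / (q.natAbs : ℂ)) ^ κ * P *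
                ((Real.log x : ℂ) ^ κ)‖ ≤
            C * deltaq g q * Real.log x ^ (β - 1) := by
  have hκ1 : -1 < κ.re := by nlinarith [sq_nonneg κ.im]
  obtain ⟨K, C, hF⟩ := fq_hyp hg hA hB hC
  refine ⟨((2 * K + 1 + ‖κ‖) * (K * Real.exp K)) * (1 + ‖κ + 1‖ / (κ.re + 1 - β)) * C, fun q hq => ?_⟩
  obtain ⟨P, hP, hasym⟩ := (hF q hq).core hκ1 hβ
  set Q := q.natAbs with hQ
  have hQ0 : Q ≠ 0 := Int.natAbs_ne_zero.2 hq
  set W := ((Q.totient : ℂ) / (Q : ℂ)) ^ κ with hW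
  have hW0 : W ≠ 0 := by
    rw [hW, Complex.cpow_ne_zero_iff]
    left
    have : Q.totient ≠ 0 := (Nat.totient_pos.2 (Nat.pos_of_ne_zero hQ0)).ne'
    have h1 : (Q.totient : ℂ) ≠ 0 := by exact_mod_cast this
    have h2 : (Q : ℂ) ≠ 0 := by exact_mod_cast hQ0
    exact div_ne_zero h1 h2
  refine ⟨P / W, ?_, fun x hx => ?_⟩
  · refine (hP.div_const W).congr' ?_
    filter_upwards [eventually_gt_atTop Q] with N hN
    rw [div_eq_iff hW0, hW, ← totient_cpow hQ0, Nat.primesBelow,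
      ← prod_filter_mul_prod_filter_not _ (fun p : ℕ => ¬ (p:ℤ) ∣ q), filter_filter]
    congr 1
    · refine prod_congr rfl fun p hp => ?_
      obtain ⟨-, hp1, hp2⟩ := mem_filter.1 hp
      rw [eulerFactor]
      congr 1
      refine tsum_congr fun r => ?_
      rw [Int.natCast_dvd] at hp2
      rw [fq, if_pos (((hp1.coprime_iff_not_dvd).2 hp2).pow_left r), Nat.cast_pow]
    · have : (filter (fun p : ℕ => ¬¬ (p:ℤ) ∣ q) (filter (fun p => Nat.Prime p) (range N))) = Q.primeFactors := by
        ext p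
        simp only [mem_filter, mem_range, not_not, Nat.mem_primeFactors, Int.natCast_dvd]
        constructor
        · rintro ⟨⟨_, h⟩, h'⟩; exact ⟨h, h', hQ0⟩
        · rintro ⟨h, h', _⟩
          exact ⟨⟨(Nat.le_of_dvd (Nat.pos_of_ne_zero hQ0) h').trans_lt hN, h⟩, h'⟩
      rw [this]
      refine prod_congr rfl fun p hp => ?_
      obtain ⟨hp1, hp2, _⟩ := Nat.mem_primeFactors.1 hp
      rw [tsum_eq_single 0]
      · simp [fq, hg.1]
      · intro r hr
        rw [fq, if_neg]
        rw [Nat.coprime_pow_left_iff (Nat.pos_of_ne_zero hr), hp1.coprime_iff_not_dvd]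
        simpa using hp2
  · have h := hasym x hx
    have e1 : Mgq g x q = ∑ n ∈ Icc 1 ⌊x⌋₊, fq g Q n := by
      rw [Mgq, sum_filter]; rfl
    have e2 : (Complex.Gamma (κ + 1))⁻¹ * W * (P / W) = (Complex.Gamma (κ + 1))⁻¹ * P := by
      field_simp
    rw [e1, e2]
    refine h.trans (le_of_eq ?_)
    ring
end

section
/- Suppose g : ℕ → ℂ is multiplicative and satisfies Condition (A) for some κ = ξ + iη with η² < 2ξ + 1, satisfies Condition (B), and satisfies Condition (C) with some β < ξ + 1. Then ∑_{n < x} g(n) ≪_g x·(log x)^{β−1} for all x ≥ 2. -/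
open Filter Finset
open scoped ENNReal NNReal

lemma aux_L (N : ℕ) : 0 ≤ ∑ n ∈ range N, (Real.log N - Real.log n) ∧
    ∑ n ∈ range N, (Real.log N - Real.log n) ≤ 2 * N := by
  induction N with
  | zero => simp
  | succ N ih =>
    have h : ∑ n ∈ range (N+1), (Real.log ((N+1 : ℕ):ℝ) - Real.log n)
        = ∑ n ∈ range N, (Real.log N - Real.log n)
          + (N+1) * (Real.log ((N+1 : ℕ):ℝ) - Real.log N) := by
      simp only [Finset.sum_sub_distrib, Finset.sum_const, Finset.sum_range_succ,
        Finset.card_range, nsmul_eq_mul]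
      push_cast; ring
    rw [h]
    rcases Nat.eq_zero_or_pos N with h0 | h0
    · subst h0; simp
    have hN : (1:ℝ) ≤ N := by exact_mod_cast h0
    have h1 : 0 ≤ Real.log ((N+1 : ℕ):ℝ) - Real.log N := by
      rw [sub_nonneg]; apply Real.log_le_log <;> push_cast <;> linarith
    have h2 : Real.log ((N+1 : ℕ):ℝ) - Real.log N ≤ 1 / N := by
      rw [← Real.log_div (by positivity) (by positivity)]
      refine (Real.log_le_sub_one_of_pos (by positivity)).trans (le_of_eq ?_)
      push_cast; field_simp; ring
    have h3 : ((N:ℝ)+1) * (1 / N) ≤ 2 := by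
      rw [mul_one_div, div_le_iff₀ (by linarith)]; linarith
    have h4 := mul_le_mul_of_nonneg_left h2 (by positivity : (0:ℝ) ≤ (N:ℝ)+1)
    refine ⟨add_nonneg ih.1 (by positivity), ?_⟩
    push_cast at *; linarith [ih.2]

lemma aux_T (g : ℕ → ℂ) (κ : ℂ) (hA : CondA g κ) : ∃ K : ℝ, 0 ≤ K ∧ ∀ N : ℕ,
    ‖∑ p ∈ (range (N+1)).filter Nat.Prime, g p * (Real.log p : ℂ)‖ ≤ K * N := by
  obtain ⟨C, hC⟩ := hA
  set a : ℕ → ℂ := fun n => if n.Prime then g n * (Real.log n : ℂ) / n else 0 with ha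
  set A : ℕ → ℂ := fun N => ∑ n ∈ range (N+1), a n with hAdef
  have hE : ∀ n : ℕ, ‖A n - κ * (Real.log n : ℂ)‖ ≤ max C 0 := by
    intro n
    rcases Nat.lt_or_ge n 2 with h | h
    · interval_cases n
      · simp [hAdef, ha, Nat.not_prime_zero]
      · simp [hAdef, ha, Finset.sum_range_succ, Nat.not_prime_zero, Nat.not_prime_one]
    · have := hC n (by exact_mod_cast h)
      refine le_trans (le_of_eq ?_) (this.trans (le_max_left _ _))
      simp only [hAdef, ha, primesLE, Nat.floor_natCast, Finset.sum_filter]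
  have hT : ∀ N : ℕ, ∑ p ∈ (range (N+1)).filter Nat.Prime, g p * (Real.log p : ℂ)
      = ∑ n ∈ range N, (A N - A n) := by
    intro N
    rw [Finset.sum_filter]
    induction N with
    | zero => simp [Nat.not_prime_zero]
    | succ N ih =>
      rw [Finset.sum_range_succ, ih]
      have e : A (N+1) = A N + a (N+1) := by simp only [hAdef]; rw [Finset.sum_range_succ]
      have e2 : (if (N+1).Prime then g (N+1) * (Real.log (N+1 : ℕ) : ℂ) else 0)
          = (N+1) * a (N+1) := by
        simp only [ha]
        split_ifs
        · have : (N:ℂ)+1 ≠ 0 := by exact_mod_cast Nat.succ_ne_zero N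
          push_cast; field_simp
        · simp
      rw [e2, e]
      simp only [Finset.sum_sub_distrib, Finset.sum_const, Finset.sum_range_succ,
        Finset.card_range, nsmul_eq_mul]
      push_cast; ring
  refine ⟨2 * max C 0 + 2 * ‖κ‖, by positivity, fun N => ?_⟩
  rw [hT]
  have e : ∑ n ∈ range N, (A N - A n) =
      ∑ n ∈ range N, ((A N - κ * (Real.log N : ℂ)) - (A n - κ * (Real.log n : ℂ)))
      + κ * ((∑ n ∈ range N, (Real.log N - Real.log n) : ℝ) : ℂ) := by
    push_cast
    rw [Finset.mul_sum, ← Finset.sum_add_distrib]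
    exact Finset.sum_congr rfl fun n _ => by ring
  rw [e]
  have h1 : ‖∑ n ∈ range N, ((A N - κ * (Real.log N : ℂ)) - (A n - κ * (Real.log n : ℂ)))‖
      ≤ N * (2 * max C 0) := by
    refine (norm_sum_le_of_le (range N) (fun n _ => (norm_sub_le _ _).trans
      (add_le_add (hE N) (hE n)))).trans (le_of_eq ?_)
    simp; ring
  have h2 : ‖κ * ((∑ n ∈ range N, (Real.log N - Real.log n) : ℝ) : ℂ)‖ ≤ ‖κ‖ * (2 * N) := by
    rw [norm_mul, Complex.norm_real, Real.norm_of_nonneg (aux_L N).1]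
    exact mul_le_mul_of_nonneg_left (aux_L N).2 (norm_nonneg _)
  refine (norm_add_le _ _).trans ?_
  linarith

noncomputable def b1 (g : ℕ → ℂ) (p r : ℕ) : ℝ :=
  ‖g p‖ * Real.log p / p * (‖g (p ^ (r+1))‖ / ((p ^ (r+1) : ℕ) : ℝ))
noncomputable def b2 (g : ℕ → ℂ) (p r : ℕ) : ℝ :=
  ‖g (p ^ (r+2))‖ * Real.log ((p ^ (r+2) : ℕ) : ℝ) / ((p ^ (r+2) : ℕ) : ℝ)

lemma b1_nonneg (g : ℕ → ℂ) (p r : ℕ) : 0 ≤ b1 g p r := by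
  unfold b1; have := Real.log_natCast_nonneg p; positivity
lemma b2_nonneg (g : ℕ → ℂ) (p r : ℕ) : 0 ≤ b2 g p r := by
  unfold b2; have := Real.log_natCast_nonneg (p^(r+2)); positivity

lemma aux_B (g : ℕ → ℂ) (hB : CondB g) :
    (Summable fun q : Nat.Primes × ℕ => b1 g q.1 q.2) ∧
    (Summable fun q : Nat.Primes × ℕ => b2 g q.1 q.2) := by
  unfold CondB at hB
  rw [ENNReal.add_lt_top] at hB
  obtain ⟨h1, h2⟩ := hB
  simp_rw [← ENNReal.tsum_mul_left] at h1
  rw [← ENNReal.tsum_prod] at h1 h2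
  constructor
  · refine (ENNReal.summable_toReal h1.ne).congr fun q => ?_
    simp only [b1, ENNReal.toReal_mul, ENNReal.toReal_div, ENNReal.toReal_natCast,
      ENNReal.toReal_ofReal (Real.log_natCast_nonneg _), ENNReal.coe_toReal, coe_nnnorm]
  · refine (ENNReal.summable_toReal h2.ne).congr fun q => ?_
    simp only [b2, ENNReal.toReal_mul, ENNReal.toReal_div, ENNReal.toReal_natCast,
      ENNReal.toReal_ofReal (Real.log_natCast_nonneg _), ENNReal.coe_toReal, coe_nnnorm]

lemma aux_sum (b : ℕ → ℕ → ℝ) (hb : ∀ p r, 0 ≤ b p r)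
    (hs : Summable fun q : Nat.Primes × ℕ => b q.1 q.2) (P : Finset ℕ)
    (hP : ∀ p ∈ P, p.Prime) (R : ℕ) :
    ∑ p ∈ P, ∑ r ∈ range R, b p r ≤ ∑' q : Nat.Primes × ℕ, b q.1 q.2 := by
  have := hs.sum_le_tsum ((show Finset Nat.Primes from P.subtype Nat.Prime) ×ˢ (range R)) (fun q _ => hb _ _)
  refine le_trans (le_of_eq ?_) this
  rw [Finset.sum_product]
  exact (Finset.sum_subtype_of_mem (fun p => ∑ r ∈ range R, b p r) hP).symm

lemma aux_sum2 (b : ℕ → ℕ → ℝ) (hb : ∀ p r, 0 ≤ b p r)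
    (hs : Summable fun q : Nat.Primes × ℕ => b q.1 q.2) (P : Finset ℕ)
    (hP : ∀ p ∈ P, p.Prime) :
    ∑ p ∈ P, ∑' r, b p r ≤ ∑' q : Nat.Primes × ℕ, b q.1 q.2 := by
  have := hs.prod.sum_le_tsum (show Finset Nat.Primes from P.subtype Nat.Prime) (fun q _ => tsum_nonneg fun r => hb _ _)
  rw [hs.tsum_prod]
  refine le_trans (le_of_eq ?_) this
  exact (Finset.sum_subtype_of_mem (fun p => ∑' r, b p r) hP).symm

lemma aux_G (g : ℕ → ℂ) (β : ℝ) (hg : IsMult g) (hB : CondB g) (hC : CondC g β) :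
    ∃ C : ℝ, ∀ x : ℝ, 2 ≤ x →
      ∑ n ∈ Finset.Icc 1 ⌊x⌋₊, ‖g n‖ / n ≤ C * Real.log x ^ β := by
  obtain ⟨C, hC⟩ := hC
  obtain ⟨-, hs⟩ := aux_B g hB
  set W := ∑' q : Nat.Primes × ℕ, b2 g q.1 q.2
  refine ⟨C * Real.exp W, fun x hx => ?_⟩
  set f : ℕ → ℝ := fun n => ‖g n‖ / n with hf
  have hf0 : ∀ n, 0 ≤ f n := fun n => by simp only [hf]; positivity
  have hf1 : f 1 = 1 := by simp [hf, hg.1]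
  have hmul : ∀ {m n : ℕ}, Nat.Coprime m n → f (m * n) = f m * f n := by
    intro m n h
    simp only [hf, hg.2 m n h, norm_mul]; push_cast; rw [mul_div_mul_comm]
  have hle : ∀ p : ℕ, p.Prime → ∀ r, f (p^(r+2)) ≤ b2 g p r := by
    intro p hp r
    simp only [hf, b2]
    have h4 : 4 ≤ p^(r+2) := calc 4 = 2^2 := by norm_num
      _ ≤ p^2 := Nat.pow_le_pow_left hp.two_le 2
      _ ≤ p^(r+2) := Nat.pow_le_pow_right hp.pos (by omega)
    have hl : 1 ≤ Real.log ((p ^ (r+2) : ℕ) : ℝ) := by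
      rw [Real.le_log_iff_exp_le (by positivity)]
      have : (4:ℝ) ≤ ((p ^ (r+2) : ℕ) : ℝ) := by exact_mod_cast h4
      linarith [Real.exp_one_lt_three]
    gcongr
    exact le_mul_of_one_le_right (norm_nonneg _) hl
  have hsp : ∀ p : ℕ, p.Prime → Summable fun r => b2 g p r := fun p hp =>
    hs.prod_factor (⟨p, hp⟩ : Nat.Primes)
  have hsf2 : ∀ p : ℕ, p.Prime → Summable fun r => f (p^(r+2)) := fun p hp =>
    Summable.of_nonneg_of_le (fun r => hf0 _) (hle p hp) (hsp p hp)
  have hsf : ∀ {p : ℕ}, p.Prime → Summable fun r => ‖f (p^r)‖ := by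
    intro p hp
    have : Summable fun r => f (p^r) := (summable_nat_add_iff 2).1 (hsf2 p hp)
    exact this.norm
  obtain ⟨hS, hH⟩ := EulerProduct.summable_and_hasSum_smoothNumbers_prod_primesBelow_tsum
    hf1 hmul hsf (⌊x⌋₊ + 1)
  have hmem : ∀ n ∈ Finset.Icc 1 ⌊x⌋₊, n ∈ Nat.smoothNumbers (⌊x⌋₊+1) := by
    intro n hn
    rw [Finset.mem_Icc] at hn
    exact Nat.mem_smoothNumbers_of_lt (by omega) (by omega)
  have s1 : ∑ n ∈ Finset.Icc 1 ⌊x⌋₊, f n ≤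
      ∏ p ∈ (⌊x⌋₊+1).primesBelow, ∑' r, f (p^r) := by
    classical
    rw [← hH.tsum_eq]
    have := hH.summable.sum_le_tsum
      ((Finset.Icc 1 ⌊x⌋₊).subtype (· ∈ Nat.smoothNumbers (⌊x⌋₊+1))) (fun q _ => hf0 _)
    refine le_trans (le_of_eq ?_) this
    exact (Finset.sum_subtype_of_mem f hmem).symm
  have hP : (⌊x⌋₊+1).primesBelow = primesLE x := rfl
  rw [hP] at s1
  have hPp : ∀ p ∈ primesLE x, p.Prime := fun p hp => (Finset.mem_filter.1 hp).2
  have s2 : ∏ p ∈ primesLE x, ∑' r, f (p^r) ≤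
      ∏ p ∈ primesLE x, ((1 + ‖g p‖ / p) * Real.exp (∑' r, b2 g p r)) := by
    refine Finset.prod_le_prod (fun p _ => tsum_nonneg fun r => hf0 _) fun p hp => ?_
    have hp := hPp p hp
    have e := (hsf hp).of_norm.sum_add_tsum_nat_add 2
    rw [← e]
    simp only [Finset.sum_range_succ, Finset.sum_range_zero, pow_zero, pow_one, hf1, zero_add]
    have t1 := (hsf2 p hp).tsum_le_tsum (hle p hp) (hsp p hp)
    have t2 := Real.add_one_le_exp (∑' r, b2 g p r)
    have t0 : 0 ≤ ∑' r, b2 g p r := tsum_nonneg fun r => b2_nonneg _ _ _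
    have hfp : 0 ≤ f p := hf0 p
    change 1 + f p + _ ≤ (1 + f p) * _
    nlinarith
  rw [Finset.prod_mul_distrib, ← Real.exp_sum] at s2
  have s3 := aux_sum2 (b2 g) (b2_nonneg g) hs (primesLE x) hPp
  have h0 : 0 ≤ ∏ p ∈ primesLE x, (1 + ‖g p‖ / (p:ℝ)) :=
    Finset.prod_nonneg fun p _ => by positivity
  calc _ ≤ _ := s1.trans s2
    _ ≤ (C * Real.log x ^ β) * Real.exp W :=
      mul_le_mul (hC x hx) (Real.exp_le_exp.2 s3) (Real.exp_pos _).le (h0.trans (hC x hx))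
    _ = _ := by ring

lemma aux_inj (p : ℕ) (hp : p.Prime) (F H : ℕ → ℝ) (hF : ∀ n, 0 ≤ F n) (hH : ∀ n, 0 ≤ H n)
    (N : ℕ) :
    ∑ n ∈ (Finset.Icc 1 N).filter (fun n => 2 ≤ n.factorization p),
      F (n.factorization p) * H (n / p ^ n.factorization p)
    ≤ (∑ r ∈ range N, F (r+2)) * ∑ m ∈ Finset.Icc 1 N, H m := by
  classical
  rw [Finset.sum_mul_sum, ← Finset.sum_product']
  set S := (Finset.Icc 1 N).filter (fun n => 2 ≤ n.factorization p) with hS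
  set i : ℕ → ℕ × ℕ := fun n => (n.factorization p - 2, n / p ^ n.factorization p) with hi
  have hinj : Set.InjOn i S := by
    intro a ha b hb hab
    simp only [hS, Finset.coe_filter, Set.mem_setOf_eq] at ha hb
    simp only [hi, Prod.mk.injEq] at hab
    have hv : a.factorization p = b.factorization p := by omega
    have ea := Nat.ordProj_mul_ordCompl_eq_self a p
    have eb := Nat.ordProj_mul_ordCompl_eq_self b p
    rw [← ea, ← eb, hab.2, hv]
  have e : ∑ n ∈ S, F (n.factorization p) * H (n / p ^ n.factorization p)
      = ∑ q ∈ S.image i, F (q.1 + 2) * H q.2 := by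
    rw [Finset.sum_image hinj]
    refine Finset.sum_congr rfl fun n hn => ?_
    have h2 : 2 ≤ n.factorization p := (Finset.mem_filter.1 hn).2
    simp only [hi]
    rw [Nat.sub_add_cancel h2]
  rw [e]
  refine Finset.sum_le_sum_of_subset_of_nonneg ?_ fun q _ _ => mul_nonneg (hF _) (hH _)
  intro q hq
  obtain ⟨n, hn, rfl⟩ := Finset.mem_image.1 hq
  have h := Finset.mem_filter.1 hn
  have h1 := Finset.mem_Icc.1 h.1
  have hlt := Nat.factorization_lt (n := n) p (by omega)
  have hpos := Nat.ordCompl_pos (n := n) p (by omega)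
  have hle := Nat.div_le_self n (p ^ n.factorization p)
  simp only [hi, Finset.mem_product, Finset.mem_range, Finset.mem_Icc]
  omega

lemma aux_e (g : ℕ → ℂ) (hg : IsMult g) (n p N : ℕ) (hn : 1 ≤ n) (hnN : n ≤ N) (hp : p.Prime) :
    ‖g n * ((n.factorization p : ℝ) * Real.log p : ℝ)
      - (if p ∣ n then g p * (Real.log p : ℂ) * g (n / p) else 0)‖ ≤
    if 2 ≤ n.factorization p then
      N * (((n.factorization p * Real.log p * ‖g (p ^ n.factorization p)‖ +
        ‖g p‖ * Real.log p * ‖g (p ^ (n.factorization p - 1))‖) / (p:ℝ) ^ n.factorization p) *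
        (‖g (n / p ^ n.factorization p)‖ / ((n / p ^ n.factorization p : ℕ) : ℝ))) else 0 := by
  have hn0 : n ≠ 0 := by omega
  have hlog : 0 ≤ Real.log p := Real.log_natCast_nonneg p
  have hpr : (0:ℝ) < p := by exact_mod_cast hp.pos
  generalize hv : n.factorization p = v
  set m := n / p ^ v with hm
  have en : n = p ^ v * m := by
    rw [hm, ← hv]; exact (Nat.ordProj_mul_ordCompl_eq_self n p).symm
  have hcop : Nat.Coprime p m := by
    rw [hm, ← hv]; exact Nat.coprime_ordCompl hp hn0
  have hmpos : 0 < m := by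
    rw [hm, ← hv]; exact Nat.ordCompl_pos p hn0
  clear_value m
  rcases Nat.lt_or_ge v 2 with h | h
  · rw [if_neg (show ¬ 2 ≤ v by omega)]
    interval_cases v
    · have : ¬ p ∣ n := by
        rw [en, pow_zero, one_mul]
        exact fun hd => hp.one_lt.ne' (Nat.Coprime.eq_one_of_dvd hcop hd)
      rw [if_neg this]; simp
    · rw [pow_one] at en
      have hd : p ∣ n := ⟨m, en⟩
      have hnd : n / p = m := by rw [en, Nat.mul_div_cancel_left _ hp.pos]
      rw [if_pos hd, hnd, en, hg.2 _ _ hcop]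
      apply le_of_eq
      rw [norm_eq_zero]; push_cast; ring
  · rw [if_pos h]
    obtain ⟨k, rfl⟩ : ∃ k, v = k + 1 := ⟨v - 1, by omega⟩
    have en2 : n = p * (p ^ k * m) := by rw [en]; ring
    have hd : p ∣ n := ⟨_, en2⟩
    have hnd : n / p = p ^ k * m := by
      conv_lhs => rw [en2]
      rw [Nat.mul_div_cancel_left _ hp.pos]
    rw [if_pos hd, hnd, Nat.add_sub_cancel]
    have g1 : g n = g (p^(k+1)) * g m := by
      rw [en]; exact hg.2 _ _ (hcop.pow_left _)
    rw [g1, hg.2 _ _ (hcop.pow_left k)]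
    have hNr : (p:ℝ)^(k+1) * m ≤ N := by
      have : p^(k+1)*m ≤ N := en ▸ hnN
      exact_mod_cast this
    have hmr : (0:ℝ) < m := by exact_mod_cast hmpos
    refine (norm_sub_le _ _).trans ?_
    have ea : ‖g (p^(k+1)) * g m * ((((k+1:ℕ):ℝ) * Real.log p : ℝ):ℂ)‖
        = ((k+1:ℕ):ℝ) * Real.log p * ‖g (p^(k+1))‖ * ‖g m‖ := by
      rw [norm_mul, norm_mul, Complex.norm_real, Real.norm_of_nonneg (by positivity)]; ring
    have eb : ‖g p * (Real.log p : ℂ) * (g (p^k) * g m)‖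
        = ‖g p‖ * Real.log p * ‖g (p^k)‖ * ‖g m‖ := by
      rw [norm_mul, norm_mul, norm_mul, Complex.norm_real, Real.norm_of_nonneg hlog]; ring
    rw [ea, eb, ← add_mul]
    set X := ((k+1:ℕ):ℝ) * Real.log p * ‖g (p^(k+1))‖ + ‖g p‖ * Real.log p * ‖g (p^k)‖ with hX
    have hX0 : 0 ≤ X := by positivity
    rw [div_mul_div_comm, ← mul_div_assoc, le_div_iff₀ (by positivity), mul_comm]
    exact mul_le_mul_of_nonneg_right hNr (by positivity)

lemma aux_main (g : ℕ → ℂ) (κ : ℂ) (hg : IsMult g) (hA : CondA g κ) (hB : CondB g) :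
    ∃ K : ℝ, 0 ≤ K ∧ ∀ N : ℕ, ‖∑ n ∈ Finset.Icc 1 N, g n * (Real.log n : ℂ)‖ ≤
      K * N * ∑ n ∈ Finset.Icc 1 N, ‖g n‖ / n := by
  obtain ⟨K, hK0, hK⟩ := aux_T g κ hA
  obtain ⟨hs1, hs2⟩ := aux_B g hB
  set W1 := ∑' q : Nat.Primes × ℕ, b1 g q.1 q.2
  set W2 := ∑' q : Nat.Primes × ℕ, b2 g q.1 q.2
  have hW1 : 0 ≤ W1 := tsum_nonneg fun q => b1_nonneg _ _ _
  have hW2 : 0 ≤ W2 := tsum_nonneg fun q => b2_nonneg _ _ _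
  refine ⟨K + (W1 + W2), by positivity, fun N => ?_⟩
  set G := ∑ n ∈ Finset.Icc 1 N, ‖g n‖ / (n:ℝ) with hG
  have hG0 : 0 ≤ G := Finset.sum_nonneg fun n _ => by positivity
  set P := (range (N+1)).filter Nat.Prime with hP
  have hPp : ∀ p ∈ P, p.Prime := fun p hp => (Finset.mem_filter.1 hp).2
  set M : ℕ → ℕ → ℂ := fun n p => if p ∣ n then g p * (Real.log p : ℂ) * g (n / p) else 0 with hM
  have hlog : ∀ n ∈ Finset.Icc 1 N, g n * (Real.log n : ℂ) =
      ∑ p ∈ P, M n p + ∑ p ∈ P, (g n * ((n.factorization p : ℝ) * Real.log p : ℝ) - M n p) := by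
    intro n hn
    have hn := Finset.mem_Icc.1 hn
    rw [← Finset.sum_add_distrib]
    simp only [add_sub_cancel]
    rw [← Finset.mul_sum, ← Complex.ofReal_sum, Real.log_nat_eq_sum_factorization]
    rw [Finsupp.sum_of_support_subset (s := P)]
    · intro p hp
      have hp' : p ∈ n.primeFactors := by simpa using hp
      have h1 := Nat.prime_of_mem_primeFactors hp'
      have h2 := Nat.le_of_mem_primeFactors hp'
      simp only [hP, Finset.mem_filter, Finset.mem_range]
      exact ⟨by omega, h1⟩
    · simp
  rw [Finset.sum_congr rfl hlog, Finset.sum_add_distrib]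
  have main : ‖∑ n ∈ Finset.Icc 1 N, ∑ p ∈ P, M n p‖ ≤ K * N * G := by
    have e1 : ∀ p ∈ P, ∑ n ∈ Finset.Icc 1 N, M n p =
        ∑ m ∈ Finset.Icc 1 N, if p * m ≤ N then g p * (Real.log p : ℂ) * g m else 0 := by
      intro p hp
      have hp := hPp p hp
      simp only [hM]
      rw [← Finset.sum_filter, ← Finset.sum_filter]
      symm
      refine Finset.sum_nbij' (fun m => p * m) (fun n => n / p) ?_ ?_ ?_ ?_ ?_
      · intro m hm
        simp only [Finset.mem_filter, Finset.mem_Icc] at hm ⊢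
        exact ⟨⟨Nat.mul_pos hp.pos (by omega), hm.2⟩, dvd_mul_right _ _⟩
      · intro n hn
        simp only [Finset.mem_filter, Finset.mem_Icc] at hn ⊢
        refine ⟨⟨Nat.div_pos (Nat.le_of_dvd (by omega) hn.2) hp.pos,
          (Nat.div_le_self _ _).trans hn.1.2⟩, ?_⟩
        rw [Nat.mul_div_cancel' hn.2]; exact hn.1.2
      · intro m _
        exact Nat.mul_div_cancel_left _ hp.pos
      · intro n hn
        exact Nat.mul_div_cancel' (Finset.mem_filter.1 hn).2
      · intro m _
        rw [Nat.mul_div_cancel_left _ hp.pos]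
    rw [Finset.sum_comm, Finset.sum_congr rfl e1, Finset.sum_comm, hG, Finset.mul_sum]
    refine norm_sum_le_of_le _ fun m hm => ?_
    have hm := Finset.mem_Icc.1 hm
    have e2 : (∑ p ∈ P, if p * m ≤ N then g p * (Real.log p : ℂ) * g m else 0) =
        (∑ p ∈ (range (N/m+1)).filter Nat.Prime, g p * (Real.log p : ℂ)) * g m := by
      rw [← Finset.sum_filter, Finset.sum_mul]
      refine Finset.sum_congr ?_ fun _ _ => rfl
      ext p
      simp only [hP, Finset.mem_filter, Finset.mem_range, Nat.lt_succ_iff,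
        Nat.le_div_iff_mul_le (show 0 < m by omega)]
      constructor
      · rintro ⟨⟨h1, h2⟩, h3⟩; exact ⟨h3, h2⟩
      · rintro ⟨h1, h2⟩; exact ⟨⟨(Nat.le_mul_of_pos_right p (by omega)).trans h1, h2⟩, h1⟩
    rw [e2, norm_mul]
    calc _ ≤ (K * (N / m : ℕ)) * ‖g m‖ := by gcongr; exact hK _
      _ ≤ (K * ((N:ℝ) / m)) * ‖g m‖ := by gcongr; exact Nat.cast_div_le
      _ = _ := by ring
  have err : ‖∑ n ∈ Finset.Icc 1 N, ∑ p ∈ P,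
      (g n * ((n.factorization p : ℝ) * Real.log p : ℝ) - M n p)‖ ≤ (W1 + W2) * N * G := by
    rw [Finset.sum_comm]
    have hp1 : ∀ p ∈ P, ‖∑ n ∈ Finset.Icc 1 N,
        (g n * ((n.factorization p : ℝ) * Real.log p : ℝ) - M n p)‖ ≤
        N * ((∑ r ∈ range N, (b1 g p r + b2 g p r)) * G) := by
      intro p hp
      have hp := hPp p hp
      have hlog : 0 ≤ Real.log p := Real.log_natCast_nonneg p
      refine (norm_sum_le_of_le _ fun n hn => aux_e g hg n p N (Finset.mem_Icc.1 hn).1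
        (Finset.mem_Icc.1 hn).2 hp).trans ?_
      rw [← Finset.sum_filter, ← Finset.mul_sum]
      refine mul_le_mul_of_nonneg_left ?_ (Nat.cast_nonneg _)
      refine (aux_inj p hp (fun v => ((v * Real.log p * ‖g (p ^ v)‖ +
        ‖g p‖ * Real.log p * ‖g (p ^ (v - 1))‖) / (p:ℝ) ^ v)) (fun m => ‖g m‖ / (m:ℝ))
        (fun _ => by positivity) (fun _ => by positivity) N).trans (le_of_eq ?_)
      congr 1
      refine Finset.sum_congr rfl fun r _ => ?_
      have hpr : (p:ℝ) ≠ 0 := by exact_mod_cast hp.ne_zero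
      simp only [b1, b2, Nat.cast_pow, Real.log_pow]
      rw [show r + 2 - 1 = r + 1 by omega]
      field_simp
      ring
    refine (norm_sum_le_of_le _ hp1).trans ?_
    rw [← Finset.mul_sum, ← Finset.sum_mul]
    have h1 := aux_sum (b1 g) (b1_nonneg g) hs1 P hPp N
    have h2 := aux_sum (b2 g) (b2_nonneg g) hs2 P hPp N
    simp only [Finset.sum_add_distrib]
    rw [show (W1 + W2) * N * G = N * ((W1 + W2) * G) by ring]
    gcongr
  refine (norm_add_le _ _).trans ((add_le_add main err).trans (le_of_eq ?_))
  ring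

theorem stmt2 (g : ℕ → ℂ) (κ : ℂ) (β : ℝ) (hg : IsMult g)
    (hκ : κ.im ^ 2 < 2 * κ.re + 1)
    (hA : CondA g κ) (hB : CondB g)
    (hβ0 : 0 ≤ β) (hβ : β < κ.re + 1) (hC : CondC g β) :
    ∃ C : ℝ, ∀ x : ℝ, 2 ≤ x →
      ‖∑ n ∈ Finset.Ico 1 ⌈x⌉₊, g n‖ ≤ C * x * Real.log x ^ (β - 1) := by

  obtain ⟨K, hK0, hK⟩ := aux_main g κ hg hA hB
  obtain ⟨C, hG⟩ := aux_G g β hg hB hC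
  refine ⟨(K + 1) * C, fun x hx => ?_⟩
  have hx0 : 0 < x := by linarith
  have hl : 0 < Real.log x := Real.log_pos (by linarith)
  have hceil : 0 < ⌈x⌉₊ := Nat.ceil_pos.2 hx0
  obtain ⟨N, hN⟩ : ∃ N, ⌈x⌉₊ = N + 1 := ⟨⌈x⌉₊ - 1, by omega⟩
  have hNx : (N:ℝ) ≤ x := by
    have := Nat.ceil_lt_add_one hx0.le
    rw [hN] at this; push_cast at this; linarith
  have hNf : N ≤ ⌊x⌋₊ := Nat.le_floor hNx
  have hIco : Finset.Ico 1 ⌈x⌉₊ = Finset.Icc 1 N := by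
    rw [hN]; ext n; simp only [Finset.mem_Ico, Finset.mem_Icc]; omega
  rw [hIco]
  set G := ∑ n ∈ Finset.Icc 1 N, ‖g n‖ / (n:ℝ) with hGdef
  have hG0 : 0 ≤ G := Finset.sum_nonneg fun n _ => by positivity
  have hGx : G ≤ C * Real.log x ^ β := by
    refine le_trans ?_ (hG x hx)
    exact Finset.sum_le_sum_of_subset_of_nonneg (Finset.Icc_subset_Icc_right hNf)
      fun n _ _ => by positivity
  have e : (Real.log x : ℂ) * ∑ n ∈ Finset.Icc 1 N, g n =
      ∑ n ∈ Finset.Icc 1 N, g n * (Real.log n : ℂ) +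
      ∑ n ∈ Finset.Icc 1 N, g n * ((Real.log x - Real.log n : ℝ) : ℂ) := by
    rw [← Finset.sum_add_distrib, Finset.mul_sum]
    exact Finset.sum_congr rfl fun n _ => by push_cast; ring
  have h2 : ‖∑ n ∈ Finset.Icc 1 N, g n * ((Real.log x - Real.log n : ℝ) : ℂ)‖ ≤ x * G := by
    rw [hGdef, Finset.mul_sum]
    refine norm_sum_le_of_le _ fun n hn => ?_
    have hn := Finset.mem_Icc.1 hn
    have hn0 : (0:ℝ) < n := by exact_mod_cast hn.1
    have hnx : (n:ℝ) ≤ x := le_trans (by exact_mod_cast hn.2) hNx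
    have a1 : 0 ≤ Real.log x - Real.log n := sub_nonneg.2 (Real.log_le_log hn0 hnx)
    have a2 : Real.log x - Real.log n ≤ x / n := by
      rw [← Real.log_div hx0.ne' hn0.ne']
      have := Real.log_le_sub_one_of_pos (div_pos hx0 hn0)
      linarith
    rw [norm_mul, Complex.norm_real, Real.norm_of_nonneg a1]
    calc _ ≤ ‖g n‖ * (x / n) := by gcongr
      _ = _ := by ring
  have h3 : Real.log x * ‖∑ n ∈ Finset.Icc 1 N, g n‖ ≤ (K + 1) * x * G := by
    have : Real.log x * ‖∑ n ∈ Finset.Icc 1 N, g n‖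
        = ‖(Real.log x : ℂ) * ∑ n ∈ Finset.Icc 1 N, g n‖ := by
      rw [norm_mul, Complex.norm_real, Real.norm_of_nonneg hl.le]
    rw [this, e]
    refine (norm_add_le _ _).trans ((add_le_add (hK N) h2).trans ?_)
    have : K * N * G ≤ K * x * G := by gcongr
    linarith
  have h4 : Real.log x * ‖∑ n ∈ Finset.Icc 1 N, g n‖ ≤
      (K + 1) * x * (C * Real.log x ^ β) :=
    h3.trans (mul_le_mul_of_nonneg_left hGx (by positivity))
  rw [Real.rpow_sub_one hl.ne', ← mul_div_assoc, le_div_iff₀ hl]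
  linarith
end

section
/- Let g : ℕ → ℂ be any function, M_g(x) = ∑_{n ≤ x} g(n)/n, let κ ∈ ℂ, and define E(u) = M_g(u) log u − (κ+1) ∫_2^u M_g(t) t^{−1} dt for u ≥ 2. Then for every x ≥ 2, M_g(x) = (κ+1) · log^κ x · ∫_2^x E(u) u^{−1} (log u)^{−κ−2} du + E(x) (log x)^{−1}, where all complex powers of log u are principal-branch. -/
open Filter Finset intervalIntegral

lemma Mg_measurable (g : ℕ → ℂ) : Measurable (Mg g) := by
  have h : Mg g = (fun k : ℕ => ∑ n ∈ Finset.Icc 1 k, g n / (n : ℂ)) ∘ (fun x : ℝ => ⌊x⌋₊) := rfl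
  rw [h]
  exact (measurable_from_top).comp Nat.measurable_floor

lemma Mg_intervalIntegrable (g : ℕ → ℂ) (x : ℝ) (hx : 2 ≤ x) :
    IntervalIntegrable (Mg g) MeasureTheory.volume 2 x := by
  rw [intervalIntegrable_iff_integrableOn_Ioc_of_le hx]
  refine MeasureTheory.Measure.integrableOn_of_bounded (M := ∑ n ∈ Finset.Icc 1 ⌊x⌋₊, ‖g n / (n : ℂ)‖)
    (by simp) (Mg_measurable g).aestronglyMeasurable ?_
  refine (MeasureTheory.ae_restrict_iff' measurableSet_Ioc).2 (Eventually.of_forall ?_)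
  intro t ht
  refine (norm_sum_le _ _).trans ?_
  refine Finset.sum_le_sum_of_subset_of_nonneg ?_ (fun _ _ _ => norm_nonneg _)
  exact Finset.Icc_subset_Icc le_rfl (Nat.floor_le_floor ht.2)

lemma Mg_continuousAt (g : ℕ → ℂ) (x : ℝ) (hx : 0 ≤ x) (hn : x ∉ Set.range ((↑) : ℕ → ℝ)) :
    ContinuousAt (Mg g) x := by
  have h1 : (⌊x⌋₊ : ℝ) < x := lt_of_le_of_ne (Nat.floor_le hx) (fun h => hn ⟨_, h⟩)
  have h2 := Nat.lt_floor_add_one x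
  have : (Mg g) =ᶠ[nhds x] fun _ => Mg g x := by
    filter_upwards [Ioo_mem_nhds h1 h2] with y hy
    have : ⌊y⌋₊ = ⌊x⌋₊ := (Nat.floor_eq_iff ((Nat.cast_nonneg _).trans hy.1.le)).2 ⟨hy.1.le, hy.2⟩
    simp [Mg, this]
  exact (continuousAt_const).congr this.symm

theorem stmt9 (g : ℕ → ℂ) (κ : ℂ) (E : ℝ → ℂ)
    (hE : ∀ u : ℝ, 2 ≤ u →
      E u = Mg g u * (Real.log u : ℂ) - (κ + 1) * ∫ t in (2 : ℝ)..u, Mg g t / (t : ℂ)) :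
    ∀ x : ℝ, 2 ≤ x →
      Mg g x =
        (κ + 1) * ((Real.log x : ℂ) ^ κ) *
            (∫ u in (2 : ℝ)..x, E u / (u : ℂ) * ((Real.log u : ℂ) ^ (-κ - 2))) +
          E x / (Real.log x : ℂ) := by
  intro x hx
  have hlog : ∀ u : ℝ, 2 ≤ u → 0 < Real.log u := fun u hu => Real.log_pos (by linarith)
  have hinvc : ContinuousOn (fun u : ℝ => ((u : ℂ))⁻¹) (Set.Icc 2 x) := by
    intro u hu
    have : (u : ℂ) ≠ 0 := by
      have := hu.1
      exact_mod_cast (by linarith : (0:ℝ) < u).ne'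
    exact (Complex.continuous_ofReal.continuousAt.inv₀ this).continuousWithinAt
  have hlogd : ∀ u : ℝ, 2 ≤ u → HasDerivAt (fun u : ℝ => (Real.log u : ℂ)) ((u : ℂ)⁻¹) u := by
    intro u hu
    have := (Real.hasDerivAt_log (by linarith : u ≠ 0)).ofReal_comp
    simpa using this
  have hpow : ∀ (c : ℂ) (u : ℝ), 2 ≤ u → HasDerivAt (fun u : ℝ => (Real.log u : ℂ) ^ c)
      (c * (Real.log u : ℂ) ^ (c - 1) * (u : ℂ)⁻¹) u := by
    intro c u hu
    have h1 : HasDerivAt (fun z : ℂ => z ^ c) (c * (Real.log u : ℂ) ^ (c - 1))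
        (Real.log u : ℂ) := by
      have := (hasDerivAt_id (Real.log u : ℂ)).cpow_const (c := c)
        (Or.inl (by simpa only [id, Complex.ofReal_re] using hlog u hu))
      simpa only [id, mul_one] using this
    exact HasDerivAt.comp (h₂ := fun z : ℂ => z ^ c) u h1 (hlogd u hu)
  have hlogc : ContinuousOn (fun u : ℝ => (Real.log u : ℂ)) (Set.Icc 2 x) :=
    fun u hu => (hlogd u hu.1).continuousAt.continuousWithinAt
  have hpowc : ∀ c : ℂ, ContinuousOn (fun u : ℝ => (Real.log u : ℂ) ^ c) (Set.Icc 2 x) :=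
    fun c u hu => (hpow c u hu.1).continuousAt.continuousWithinAt
  have hII : Set.uIcc 2 x = Set.Icc 2 x := Set.uIcc_of_le hx
  have hM := Mg_intervalIntegrable g x hx
  have hMd : IntervalIntegrable (fun t : ℝ => Mg g t / (t : ℂ)) MeasureTheory.volume 2 x := by
    simp only [div_eq_mul_inv]
    exact hM.mul_continuousOn (by rw [hII]; exact hinvc)
  set F : ℝ → ℂ := fun u => ∫ t in (2 : ℝ)..u, Mg g t / (t : ℂ) with hF
  have hFc : ContinuousOn F (Set.Icc 2 x) := by
    have := intervalIntegral.continuousOn_primitive_interval' hMd (a := 2) Set.left_mem_uIcc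
    rwa [hII] at this
  have hFd : ∀ u ∈ Set.Ioo 2 x \ Set.range ((↑) : ℕ → ℝ), HasDerivAt F (Mg g u / u) u := by
    intro u hu
    have hu2 : 2 < u := hu.1.1
    refine intervalIntegral.integral_hasDerivAt_right ?_ ?_ ?_
    · refine hMd.mono_set ?_
      rw [hII, Set.uIcc_of_le hu2.le]
      exact Set.Icc_subset_Icc le_rfl hu.1.2.le
    · exact ((Mg_measurable g).div
        Complex.measurable_ofReal).stronglyMeasurable.stronglyMeasurableAtFilter
    · refine (Mg_continuousAt g u (by linarith) hu.2).div Complex.continuous_ofReal.continuousAt ?_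
      exact_mod_cast (by linarith : (0:ℝ) < u).ne'
  have key : ∫ u in (2 : ℝ)..x, E u / (u : ℂ) * ((Real.log u : ℂ) ^ (-κ - 2))
      = F x * (Real.log x : ℂ) ^ (-κ - 1) := by
    have hc : ∫ u in (2 : ℝ)..x, E u / (u : ℂ) * ((Real.log u : ℂ) ^ (-κ - 2))
        = ∫ u in (2 : ℝ)..x, (Mg g u * (Real.log u : ℂ) - (κ + 1) * F u) * (u : ℂ)⁻¹ *
          ((Real.log u : ℂ) ^ (-κ - 2)) := by
      refine intervalIntegral.integral_congr ?_
      intro u hu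
      rw [hII] at hu
      simp only [hE u hu.1, hF, div_eq_mul_inv]
    rw [hc, MeasureTheory.integral_eq_of_hasDerivAt_off_countable_of_le
      (fun u => F u * (Real.log u : ℂ) ^ (-κ - 1)) _ hx
      (Set.countable_range ((↑) : ℕ → ℝ)) (hFc.mul (hpowc _)) ?_ ?_]
    · simp [hF]
    · intro u hu
      have hu2 : 2 < u := hu.1.1
      have hL : (Real.log u : ℂ) ≠ 0 := by exact_mod_cast (hlog u hu2.le).ne'
      refine ((hFd u hu).mul (hpow (-κ - 1) u hu2.le)).congr_deriv ?_
      have e1 : (-κ - 1 - 1 : ℂ) = -κ - 2 := by ring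
      have e2 : (Real.log u : ℂ) ^ (-κ - 1) = (Real.log u : ℂ) ^ (-κ - 2) * Real.log u := by
        have h3 := Complex.cpow_add (-κ - 2) 1 hL
        rw [Complex.cpow_one] at h3
        rw [← h3]
        congr 1
        ring
      rw [e1, e2]
      ring
    · refine IntervalIntegrable.mul_continuousOn ?_ (by rw [hII]; exact hpowc _)
      refine IntervalIntegrable.mul_continuousOn ?_ (by rw [hII]; exact hinvc)
      refine IntervalIntegrable.sub (hM.mul_continuousOn (by rw [hII]; exact hlogc)) ?_
      refine ContinuousOn.intervalIntegrable ?_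
      rw [hII]
      exact continuousOn_const.mul hFc
  have hL : (Real.log x : ℂ) ≠ 0 := by exact_mod_cast (hlog x hx).ne'
  have hp : (Real.log x : ℂ) ^ κ * (Real.log x : ℂ) ^ (-κ - 1) = (Real.log x : ℂ)⁻¹ := by
    rw [← Complex.cpow_add _ _ hL, ← Complex.cpow_neg_one]
    congr 1
    ring
  rw [key, hE x hx]
  change _ = _ + (Mg g x * (Real.log x : ℂ) - (κ + 1) * F x) / _
  have : (κ + 1) * (Real.log x : ℂ) ^ κ * (F x * (Real.log x : ℂ) ^ (-κ - 1))
      = (κ + 1) * F x * (Real.log x : ℂ)⁻¹ := by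
    rw [← hp]; ring
  rw [this]
  field_simp
  ring
end

section
/- Suppose g : ℕ → ℂ is multiplicative and satisfies Condition (A) for some complex number κ and Condition (B). Then the Euler product ∏_p (1 − 1/p)^κ (1 + g(p)/p + g(p²)/p² + ⋯) converges; that is, each series ∑_{r=0}^∞ g(p^r)/p^r converges absolutely, and the partial products over primes p ≤ x tend to a (finite) limit as x → ∞. Here (1 − 1/p)^κ = exp(κ log(1 − 1/p)) is the principal-branch power. -/
open Filter Finset
open scoped ENNReal NNReal

lemma m_log_factorial (N : ℕ) :
    Real.log (N.factorial : ℝ) = ∑ p ∈ (Finset.range (N + 1)).filter Nat.Prime,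
      (N.factorial.factorization p : ℝ) * Real.log p := by
  conv_lhs => rw [← Nat.prod_factorization_pow_eq_self (Nat.factorial_ne_zero N)]
  rw [Nat.prod_factorization_eq_prod_primeFactors, Nat.cast_prod, Real.log_prod]
  · have : N.factorial.primeFactors = (Finset.range (N + 1)).filter Nat.Prime := by
      ext p
      simp only [Nat.mem_primeFactors, Finset.mem_filter, Finset.mem_range]
      constructor
      · rintro ⟨hp, h, _⟩
        exact ⟨Nat.lt_succ_of_le ((hp.dvd_factorial).1 h), hp⟩
      · rintro ⟨h, hp⟩
        exact ⟨hp, (hp.dvd_factorial).2 (Nat.lt_succ_iff.1 h), Nat.factorial_ne_zero N⟩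
    rw [this]
    refine Finset.sum_congr rfl fun p _ => ?_
    rw [Nat.cast_pow, Real.log_pow]
  · intro p hp
    have := (Nat.prime_of_mem_primeFactors hp).pos
    positivity

lemma m_fact_lower {N p : ℕ} (hp : p.Prime) :
    (N : ℝ) / p - 1 ≤ (N.factorial.factorization p : ℝ) := by
  have h1 : N / p ≤ N.factorial.factorization p := by
    rw [Nat.factorization_factorial hp (b := Nat.log p N + 2) (by omega)]
    calc N / p = N / p ^ 1 := by simp
      _ ≤ _ := Finset.single_le_sum (f := fun i => N / p ^ i) (fun _ _ => Nat.zero_le _)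
        (by simp)
  have h2 : (N : ℝ) / p < ((N / p : ℕ) : ℝ) + 1 := by
    rw [← Nat.floor_div_eq_div (K := ℝ)]
    exact Nat.lt_floor_add_one _
  have h3 : ((N / p : ℕ) : ℝ) ≤ (N.factorial.factorization p : ℝ) := by exact_mod_cast h1
  linarith

lemma m_fact_upper {N p : ℕ} (hp : p.Prime) :
    (N.factorial.factorization p : ℝ) ≤ (N : ℝ) / p + 2 * N / (p : ℝ) ^ 2 := by
  have h1 : (p - 1) * N.factorial.factorization p ≤ N := by
    rw [Nat.sub_one_mul_factorization_factorial hp]; omega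
  have hp2 : (2 : ℝ) ≤ p := by exact_mod_cast hp.two_le
  have h2 : ((p : ℝ) - 1) * (N.factorial.factorization p : ℝ) ≤ N := by
    have : ((p - 1 : ℕ) : ℝ) = (p : ℝ) - 1 := by
      rw [Nat.cast_sub hp.one_lt.le]; simp
    rw [← this]; exact_mod_cast h1
  have h3 : (N.factorial.factorization p : ℝ) ≤ N / ((p : ℝ) - 1) := by
    rw [le_div_iff₀ (by linarith)]; linarith
  refine h3.trans ?_
  rw [div_add_div _ _ (by positivity) (by positivity), div_le_div_iff₀ (by linarith) (by positivity)]
  have hN : (0 : ℝ) ≤ N := by positivity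
  have : 0 ≤ (N : ℝ) * p * (p - 2) := by
    apply mul_nonneg (by positivity); linarith
  nlinarith

lemma m_summable_log : Summable (fun n : ℕ => Real.log n / (n : ℝ) ^ 2) := by
  have h : Summable (fun n : ℕ => 2 * (1 / (n : ℝ) ^ (3 / 2 : ℝ))) :=
    (Real.summable_one_div_nat_rpow.2 (by norm_num)).mul_left 2
  refine Summable.of_nonneg_of_le (fun n => ?_) (fun n => ?_) h
  · exact div_nonneg (Real.log_natCast_nonneg n) (by positivity)
  · rcases Nat.eq_zero_or_pos n with rfl | hn
    · simp
    have hn' : (0 : ℝ) < n := by exact_mod_cast hn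
    have h1 := Real.log_le_rpow_div hn'.le (ε := 1 / 2) (by norm_num)
    have h2 : (n : ℝ) ^ 2 = (n : ℝ) ^ (1 / 2 : ℝ) * (n : ℝ) ^ (3 / 2 : ℝ) := by
      rw [← Real.rpow_add hn', ← Real.rpow_natCast]; norm_num
    rw [h2]
    have h3 : 0 < (n : ℝ) ^ (1 / 2 : ℝ) := by positivity
    have h4 : 0 < (n : ℝ) ^ (3 / 2 : ℝ) := by positivity
    rw [div_le_iff₀ (by positivity)]
    calc Real.log n ≤ _ := h1
      _ = _ := by field_simp

/-- Mertens' first theorem. -/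
lemma mertens_first : ∃ C : ℝ, ∀ N : ℕ, 1 ≤ N →
    |∑ p ∈ (Finset.range (N + 1)).filter Nat.Prime, Real.log p / p - Real.log N| ≤ C := by
  refine ⟨1 + Real.log 4 + 2 * ∑' n : ℕ, Real.log n / (n : ℝ) ^ 2, fun N hN => ?_⟩
  have hN' : (0 : ℝ) < N := by exact_mod_cast hN
  set S := (Finset.range (N + 1)).filter Nat.Prime with hS
  set T := ∑' n : ℕ, Real.log n / (n : ℝ) ^ 2 with hT
  have hl : ∀ n : ℕ, 0 ≤ Real.log n := fun n => Real.log_natCast_nonneg n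
  have hT0 : 0 ≤ T := tsum_nonneg fun n => div_nonneg (hl n) (by positivity)
  have h4 : 0 ≤ Real.log 4 := Real.log_nonneg (by norm_num)
  have hTS : ∑ p ∈ S, Real.log p / (p : ℝ) ^ 2 ≤ T :=
    m_summable_log.sum_le_tsum _ fun n _ => div_nonneg (hl n) (by positivity)
  have hth : ∑ p ∈ S, Real.log p ≤ Real.log 4 * N := by
    have := Chebyshev.theta_le_log4_mul_x (x := N) hN'.le
    rw [Chebyshev.theta_eq_sum_Icc, Nat.floor_natCast] at this
    convert this using 2
    ext p; simp [hS]
  have hup : Real.log (N.factorial : ℝ) ≤ N * Real.log N := by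
    rw [← Real.log_pow]
    apply Real.log_le_log (by positivity)
    exact_mod_cast Nat.factorial_le_pow N
  have hlo : N * Real.log N - N ≤ Real.log (N.factorial : ℝ) := by
    have := Stirling.le_log_factorial_stirling (n := N) (by omega)
    have h1 := hl N
    have h2 : 0 ≤ Real.log (2 * Real.pi) := Real.log_nonneg (by linarith [Real.pi_gt_three])
    linarith
  rw [m_log_factorial N] at hup hlo
  have e1 : N * ∑ p ∈ S, Real.log p / p - ∑ p ∈ S, Real.log p ≤
      ∑ p ∈ S, (N.factorial.factorization p : ℝ) * Real.log p := by
    rw [Finset.mul_sum, ← Finset.sum_sub_distrib]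
    refine Finset.sum_le_sum fun p hp => ?_
    have := mul_le_mul_of_nonneg_right (m_fact_lower (N := N) (Finset.mem_filter.1 hp).2) (hl p)
    calc _ = ((N : ℝ) / p - 1) * Real.log p := by ring
      _ ≤ _ := this
  have e2 : ∑ p ∈ S, (N.factorial.factorization p : ℝ) * Real.log p ≤
      N * ∑ p ∈ S, Real.log p / p + N * (2 * ∑ p ∈ S, Real.log p / (p : ℝ) ^ 2) := by
    rw [Finset.mul_sum, Finset.mul_sum, Finset.mul_sum, ← Finset.sum_add_distrib]
    refine Finset.sum_le_sum fun p hp => ?_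
    have := mul_le_mul_of_nonneg_right (m_fact_upper (N := N) (Finset.mem_filter.1 hp).2) (hl p)
    calc _ ≤ _ := this
      _ = _ := by ring
  set Q := ∑ p ∈ S, Real.log p / p
  have f1 : N * Q ≤ N * (Real.log N + Real.log 4) := by nlinarith
  have f2 : N * (Real.log N - 1 - 2 * T) ≤ N * Q := by nlinarith
  have f1' := le_of_mul_le_mul_left f1 hN'
  have f2' := le_of_mul_le_mul_left f2 hN'
  rw [abs_le]; constructor <;> linarith

lemma p_filter_sum (f : ℕ → ℂ) (N : ℕ) : ∑ p ∈ (Finset.range N).filter Nat.Prime, f p =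
    ∑ n ∈ Finset.range N, if n.Prime then f n else 0 := Finset.sum_filter _ _

/-- convergence of `∑ (g(p) - κ)/p`. -/
lemma conv_sum (g : ℕ → ℂ) (κ : ℂ) (hA : CondA g κ) : ∃ L : ℂ,
    Tendsto (fun N : ℕ => ∑ p ∈ (Finset.range N).filter Nat.Prime, (g p - κ) / (p : ℂ))
      atTop (nhds L) := by
  obtain ⟨C, hC⟩ := hA
  obtain ⟨D, hD⟩ := mertens_first
  set z : ℕ → ℂ := fun n => if n.Prime then (g n - κ) * (Real.log n : ℂ) / (n : ℂ) else 0 with hz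
  let f : ℕ → ℝ := fun n => 1 / Real.log (max n 2 : ℕ)
  have hpos : ∀ n : ℕ, 0 < Real.log (max n 2 : ℕ) := fun n => by
    apply Real.log_pos
    have : 1 < max n 2 := by omega
    exact_mod_cast this
  have hf : Antitone f := by
    intro a b hab
    apply one_div_le_one_div_of_le (hpos a)
    apply Real.log_le_log
    · have : 0 < max a 2 := by omega
      exact_mod_cast this
    · have : max a 2 ≤ max b 2 := by omega
      exact_mod_cast this
  have hf0 : Tendsto f atTop (nhds 0) := by
    have h1 : Tendsto (fun n : ℕ => Real.log (max n 2 : ℕ)) atTop atTop := by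
      refine (Real.tendsto_log_atTop.comp tendsto_natCast_atTop_atTop).congr' ?_
      filter_upwards [eventually_ge_atTop 2] with n hn
      simp [max_eq_left hn]
    refine h1.inv_tendsto_atTop.congr fun n => ?_
    simp [f]
  have hb : ∀ n, ‖∑ i ∈ Finset.range n, z i‖ ≤ max C 0 + ‖κ‖ * D := by
    have hD0 : 0 ≤ D := (abs_nonneg _).trans (hD 1 le_rfl)
    have hnn : 0 ≤ max C 0 + ‖κ‖ * D := by positivity
    intro n
    by_cases hn : n < 3
    · have : ∑ i ∈ Finset.range n, z i = 0 := by
        apply Finset.sum_eq_zero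
        intro i hi
        have : i < n := Finset.mem_range.1 hi
        have : ¬ i.Prime := fun h => by have := h.two_le; omega
        simp [hz, this]
      rw [this, norm_zero]; exact hnn
    · obtain ⟨N, rfl⟩ : ∃ N, n = N + 1 := ⟨n - 1, by omega⟩
      have h1 := hC N (by exact_mod_cast (by omega : 2 ≤ N))
      have h2 := hD N (by omega)
      rw [primesLE, Nat.floor_natCast] at h1
      rw [← p_filter_sum (fun n => (g n - κ) * (Real.log n : ℂ) / (n : ℂ))]
      set S := (Finset.range (N + 1)).filter Nat.Prime
      have e : ∑ p ∈ S, (g p - κ) * (Real.log p : ℂ) / (p : ℂ) =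
          (∑ p ∈ S, g p * (Real.log p : ℂ) / (p : ℂ) - κ * (Real.log N : ℂ)) -
          κ * ((∑ p ∈ S, Real.log p / p - Real.log N : ℝ) : ℂ) := by
        simp only [Complex.ofReal_sub, Complex.ofReal_sum, Complex.ofReal_div,
          Complex.ofReal_natCast]
        rw [mul_sub, Finset.mul_sum]
        have : ∑ p ∈ S, (g p - κ) * (Real.log p : ℂ) / (p : ℂ) =
          ∑ p ∈ S, g p * (Real.log p : ℂ) / (p : ℂ) - ∑ p ∈ S, κ * ((Real.log p : ℂ) / (p : ℂ)) := by
          rw [← Finset.sum_sub_distrib]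
          exact Finset.sum_congr rfl fun p _ => by ring
        rw [this]; ring
      rw [e]
      refine (norm_sub_le _ _).trans ?_
      rw [norm_mul, Complex.norm_real, Real.norm_eq_abs]
      exact add_le_add (h1.trans (le_max_left _ _)) (by gcongr)
  have hcs := hf.cauchySeq_series_mul_of_tendsto_zero_of_bounded hf0 hb
  obtain ⟨L, hL⟩ := cauchySeq_tendsto_of_complete hcs
  refine ⟨L, hL.congr fun N => ?_⟩
  rw [p_filter_sum (fun p => (g p - κ) / (p : ℂ))]
  refine Finset.sum_congr rfl fun p _ => ?_
  by_cases hp : p.Prime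
  · have h2 : max p 2 = p := max_eq_left hp.two_le
    have h3 := hpos p
    simp only [hz, f, hp, if_true]
    rw [h2] at h3 ⊢
    have h4 : (Real.log p : ℂ) ≠ 0 := by exact_mod_cast h3.ne'
    have h5 : (p : ℂ) ≠ 0 := by exact_mod_cast hp.ne_zero
    rw [Complex.real_smul]; push_cast
    push_cast at h4
    field_simp
  · simp [hz, hp]

lemma condB_sq (g : ℕ → ℂ) (hB : CondB g) :
    Summable (fun p : Nat.Primes => (‖g (p : ℕ)‖ / (p : ℕ)) ^ 2) := by
  have h1 := (ENNReal.add_lt_top.1 hB).1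
  have key : ∀ p : Nat.Primes,
      ENNReal.ofReal (Real.log 2 * (‖g (p : ℕ)‖ / (p : ℕ)) ^ 2) ≤
      ((‖g (p : ℕ)‖₊ : ℝ≥0∞) * ENNReal.ofReal (Real.log (p : ℕ)) / ((p : ℕ) : ℝ≥0∞)) *
        ∑' r : ℕ, (‖g ((p : ℕ) ^ (r + 1))‖₊ : ℝ≥0∞) / (((p : ℕ) ^ (r + 1) : ℕ) : ℝ≥0∞) := by
    intro p
    have hp := p.2.two_le
    have hp0 : (0 : ℝ) < (p : ℕ) := by exact_mod_cast p.2.pos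
    have hl : Real.log 2 ≤ Real.log (p : ℕ) :=
      Real.log_le_log (by norm_num) (by exact_mod_cast hp)
    have hl2 : 0 ≤ Real.log 2 := Real.log_nonneg (by norm_num)
    have hterm : (‖g (p : ℕ)‖₊ : ℝ≥0∞) / ((p : ℕ) : ℝ≥0∞) ≤
        ∑' r : ℕ, (‖g ((p : ℕ) ^ (r + 1))‖₊ : ℝ≥0∞) / (((p : ℕ) ^ (r + 1) : ℕ) : ℝ≥0∞) := by
      have := ENNReal.le_tsum (f := fun r : ℕ =>
        (‖g ((p : ℕ) ^ (r + 1))‖₊ : ℝ≥0∞) / (((p : ℕ) ^ (r + 1) : ℕ) : ℝ≥0∞)) 0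
      simpa using this
    refine le_trans ?_ (mul_le_mul_right hterm _)
    have e1 : (‖g (p : ℕ)‖₊ : ℝ≥0∞) = ENNReal.ofReal ‖g (p : ℕ)‖ := (ofReal_norm_eq_enorm _).symm
    have e2 : ((p : ℕ) : ℝ≥0∞) = ENNReal.ofReal ((p : ℕ) : ℝ) := (ENNReal.ofReal_natCast _).symm
    rw [e1, e2, ← ENNReal.ofReal_mul (norm_nonneg _), ← ENNReal.ofReal_div_of_pos hp0,
      ← ENNReal.ofReal_div_of_pos hp0, ← ENNReal.ofReal_mul
        (div_nonneg (mul_nonneg (norm_nonneg _) (hl2.trans hl)) hp0.le)]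
    apply ENNReal.ofReal_le_ofReal
    calc _ ≤ Real.log (p : ℕ) * (‖g (p : ℕ)‖ / (p : ℕ)) ^ 2 := by gcongr
      _ = _ := by ring
  have h2 : ∑' p : Nat.Primes, ENNReal.ofReal (Real.log 2 * (‖g (p : ℕ)‖ / (p : ℕ)) ^ 2) ≠ ⊤ :=
    ((ENNReal.tsum_le_tsum key).trans_lt h1).ne
  have h3 := ENNReal.summable_toReal h2
  have hl2 : 0 < Real.log 2 := Real.log_pos (by norm_num)
  have h4 : Summable (fun p : Nat.Primes => Real.log 2 * (‖g (p : ℕ)‖ / (p : ℕ)) ^ 2) := by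
    refine h3.congr fun p => ?_
    rw [ENNReal.toReal_ofReal (by positivity)]
  exact (summable_mul_left_iff hl2.ne').1 h4

lemma condB_tail (g : ℕ → ℂ) (hB : CondB g) :
    Summable (fun q : Nat.Primes × ℕ =>
      ‖g ((q.1 : ℕ) ^ (q.2 + 2))‖ / ((q.1 : ℕ) : ℝ) ^ (q.2 + 2)) := by
  have h1 := (ENNReal.add_lt_top.1 hB).2
  rw [← ENNReal.tsum_prod (f := fun (p : Nat.Primes) (r : ℕ) =>
    (‖g ((p : ℕ) ^ (r + 2))‖₊ : ℝ≥0∞) *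
          ENNReal.ofReal (Real.log ((p : ℕ) ^ (r + 2) : ℕ)) /
          (((p : ℕ) ^ (r + 2) : ℕ) : ℝ≥0∞))] at h1
  have key : ∀ q : Nat.Primes × ℕ,
      ENNReal.ofReal (‖g ((q.1 : ℕ) ^ (q.2 + 2))‖ / ((q.1 : ℕ) : ℝ) ^ (q.2 + 2)) ≤
      (‖g ((q.1 : ℕ) ^ (q.2 + 2))‖₊ : ℝ≥0∞) *
          ENNReal.ofReal (Real.log ((q.1 : ℕ) ^ (q.2 + 2) : ℕ)) /
          (((q.1 : ℕ) ^ (q.2 + 2) : ℕ) : ℝ≥0∞) := by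
    rintro ⟨p, r⟩
    dsimp only
    have hp0 : (0 : ℝ) < ((p : ℕ) ^ (r + 2) : ℕ) := by exact_mod_cast pow_pos p.2.pos _
    have hl : 1 ≤ Real.log ((p : ℕ) ^ (r + 2) : ℕ) := by
      rw [Real.le_log_iff_exp_le hp0]
      have h4 : (4 : ℝ) ≤ ((p : ℕ) ^ (r + 2) : ℕ) := by
        have : 2 ^ 2 ≤ (p : ℕ) ^ (r + 2) :=
          (Nat.pow_le_pow_left p.2.two_le 2).trans
            (Nat.pow_le_pow_right p.2.pos (by omega))
        exact_mod_cast this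
      linarith [Real.exp_one_lt_d9]
    have e1 : (‖g ((p : ℕ) ^ (r + 2))‖₊ : ℝ≥0∞) = ENNReal.ofReal ‖g ((p : ℕ) ^ (r + 2))‖ :=
      (ofReal_norm_eq_enorm _).symm
    have e2 : (((p : ℕ) ^ (r + 2) : ℕ) : ℝ≥0∞) = ENNReal.ofReal (((p : ℕ) ^ (r + 2) : ℕ) : ℝ) :=
      (ENNReal.ofReal_natCast _).symm
    rw [e1, e2, ← ENNReal.ofReal_mul (norm_nonneg _), ← ENNReal.ofReal_div_of_pos hp0]
    apply ENNReal.ofReal_le_ofReal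
    have e3 : ((p : ℕ) : ℝ) ^ (r + 2) = (((p : ℕ) ^ (r + 2) : ℕ) : ℝ) := by push_cast; rfl
    rw [e3]
    gcongr
    exact le_mul_of_one_le_right (norm_nonneg _) hl
  have h2 := ((ENNReal.tsum_le_tsum key).trans_lt h1).ne
  refine (ENNReal.summable_toReal h2).congr fun q => ?_
  rw [ENNReal.toReal_ofReal (by positivity)]

lemma prod_conv (f : ℕ → ℂ) (hf : Summable (fun p : Nat.Primes => ‖f p‖)) : ∃ L : ℂ,
    Tendsto (fun N : ℕ => ∏ p ∈ (Finset.range N).filter Nat.Prime, (1 + f p)) atTop (nhds L) := by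
  have h1 : Summable (Set.indicator {p : ℕ | p.Prime} (fun n => ‖f n‖)) :=
    summable_subtype_iff_indicator.1 hf
  have h2 : Summable (fun n : ℕ => ‖if n.Prime then f n else 0‖) := by
    refine h1.congr fun n => ?_
    by_cases hn : n.Prime <;> simp [Set.indicator, hn]
  refine ⟨_, (multipliable_one_add_of_summable h2).hasProd.tendsto_prod_nat.congr fun N => ?_⟩
  rw [Finset.prod_filter]
  refine Finset.prod_congr rfl fun n _ => ?_
  by_cases hn : n.Prime <;> simp [hn]

lemma fac_bound (a h : ℂ) (M : ℝ) (hM : ‖a‖ ≤ M) :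
    ‖Complex.exp (-a) * (1 + a + h) - 1‖ ≤
      (1 + Real.exp M * (1 + M)) * ‖a‖ ^ 2 + Real.exp M * ‖h‖ := by
  set R := Complex.exp (-a) - (1 - a) with hR
  have hRb : ‖R‖ ≤ ‖a‖ ^ 2 * Real.exp M := by
    have := Complex.norm_exp_sub_sum_le_norm_mul_exp (-a) 2
    simp only [Finset.sum_range_succ, Finset.sum_range_zero, norm_neg] at this
    have e : R = Complex.exp (-a) - (0 + (-a) ^ 0 / (Nat.factorial 0 : ℂ) +
      (-a) ^ 1 / (Nat.factorial 1 : ℂ)) := by simp [hR]; ring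
    rw [e]
    refine this.trans ?_
    gcongr
  have hE : ‖Complex.exp (-a)‖ ≤ Real.exp M := by
    refine (Complex.norm_exp_le_exp_norm _).trans ?_
    rw [norm_neg]; gcongr
  have e : Complex.exp (-a) * (1 + a + h) - 1 = -a ^ 2 + R * (1 + a) + Complex.exp (-a) * h := by
    rw [hR]; ring
  have h1a : ‖1 + a‖ ≤ 1 + M := (norm_add_le _ _).trans (by simpa using hM)
  rw [e]
  calc _ ≤ ‖-a ^ 2‖ + ‖R * (1 + a)‖ + ‖Complex.exp (-a) * h‖ := norm_add₃_le
    _ = ‖a‖ ^ 2 + ‖R‖ * ‖1 + a‖ + ‖Complex.exp (-a)‖ * ‖h‖ := by simp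
    _ ≤ ‖a‖ ^ 2 + (‖a‖ ^ 2 * Real.exp M) * (1 + M) + Real.exp M * ‖h‖ := by gcongr
    _ = _ := by ring

lemma pow_conv (κ : ℂ) : ∃ L : ℂ,
    Tendsto (fun N : ℕ => ∏ p ∈ (Finset.range N).filter Nat.Prime,
      (Complex.exp (κ / p) * (1 - 1 / (p : ℂ)) ^ κ)) atTop (nhds L) := by
  let f : ℕ → ℂ := fun n => if n.Prime then κ * (Complex.log (1 - 1 / (n : ℂ)) + 1 / n) else 0
  have hs : Summable f := by
    have hs2 : Summable (fun n : ℕ => ‖κ‖ * (1 / (n : ℝ) ^ 2)) :=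
      (Real.summable_one_div_nat_pow.2 (by norm_num)).mul_left _
    refine Summable.of_norm_bounded hs2 fun n => ?_
    by_cases hn : n.Prime
    · simp only [f, hn, if_true, norm_mul]
      gcongr
      have hn2 : (2 : ℝ) ≤ n := by exact_mod_cast hn.two_le
      have hz : ‖-(1 / (n : ℂ))‖ = 1 / (n : ℝ) := by simp
      have hz2 : 1 / (n : ℝ) ≤ 1 / 2 := by gcongr
      have := Complex.norm_log_one_add_sub_self_le (z := -(1 / (n : ℂ))) (by rw [hz]; linarith)
      rw [hz, sub_neg_eq_add, ← sub_eq_add_neg] at this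
      refine this.trans ?_
      have h3 : (1 - 1 / (n : ℝ))⁻¹ ≤ 2 := by
        rw [inv_le_comm₀ (by linarith) (by norm_num)]; linarith
      calc (1 / (n : ℝ)) ^ 2 * (1 - 1 / (n : ℝ))⁻¹ / 2 ≤ (1 / (n : ℝ)) ^ 2 * 2 / 2 := by gcongr
        _ = _ := by ring
    · simp only [f, hn, if_false, norm_zero]; positivity
  refine ⟨_, ((Complex.continuous_exp.tendsto _).comp hs.hasSum.tendsto_sum_nat).congr fun N => ?_⟩
  simp only [Function.comp_apply, f]
  rw [← Finset.sum_filter, Complex.exp_sum]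
  refine Finset.prod_congr rfl fun p hp => ?_
  have hp' := (Finset.mem_filter.1 hp).2
  have hne : (1 - 1 / (p : ℂ)) ≠ 0 := by
    have h0 : (p : ℂ) ≠ 0 := by exact_mod_cast hp'.ne_zero
    have h1 : (p : ℂ) ≠ 1 := by exact_mod_cast hp'.ne_one
    rw [sub_ne_zero]
    intro h
    rw [eq_div_iff h0, one_mul] at h
    exact h1 h
  rw [Complex.cpow_def_of_ne_zero hne, ← Complex.exp_add]
  congr 1
  ring

theorem stmt16 (g : ℕ → ℂ) (κ : ℂ) (hg : IsMult g)
    (hA : CondA g κ) (hB : CondB g) :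
    (∀ p : ℕ, p.Prime → Summable (fun r : ℕ => ‖g (p ^ r)‖ / (p : ℝ) ^ r)) ∧
    ∃ P : ℂ,
      Tendsto (fun N : ℕ => ∏ p ∈ (Finset.range N).filter Nat.Prime, eulerFactor g κ p)
        atTop (nhds P) := by
  have hsq := condB_sq g hB
  have htail := condB_tail g hB
  have hsum : ∀ p : ℕ, p.Prime → Summable (fun r : ℕ => ‖g (p ^ r)‖ / (p : ℝ) ^ r) := by
    intro p hp
    exact (summable_nat_add_iff 2).1 (htail.prod_factor ⟨p, hp⟩)
  refine ⟨hsum, ?_⟩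
  let h : ℕ → ℂ := fun p => ∑' r : ℕ, g (p ^ (r + 2)) / (p : ℂ) ^ (r + 2)
  have hF : ∀ p : ℕ, p.Prime → ∑' r : ℕ, g (p ^ r) / (p : ℂ) ^ r = 1 + g p / p + h p := by
    intro p hp
    have hs : Summable (fun r : ℕ => g (p ^ r) / (p : ℂ) ^ r) := by
      apply Summable.of_norm
      refine (hsum p hp).congr fun r => ?_
      simp
    rw [← hs.sum_add_tsum_nat_add 2]
    simp [Finset.sum_range_succ, hg.1, h]
  have hh : Summable (fun p : Nat.Primes => ‖h p‖) := by
    refine Summable.of_nonneg_of_le (fun p => norm_nonneg _) (fun p => ?_) htail.prod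
    have e : ∀ r : ℕ, ‖g ((p : ℕ) ^ (r + 2)) / ((p : ℕ) : ℂ) ^ (r + 2)‖ =
        ‖g ((p : ℕ) ^ (r + 2))‖ / ((p : ℕ) : ℝ) ^ (r + 2) := fun r => by simp
    have := norm_tsum_le_tsum_norm (f := fun r : ℕ =>
      g ((p : ℕ) ^ (r + 2)) / ((p : ℕ) : ℂ) ^ (r + 2))
      ((htail.prod_factor p).congr fun r => (e r).symm)
    simpa only [e] using this
  obtain ⟨M, hM⟩ : ∃ M : ℝ, ∀ p : Nat.Primes, ‖g (p : ℕ) / ((p : ℕ) : ℂ)‖ ≤ M := by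
    refine ⟨1 + ∑' p : Nat.Primes, (‖g (p : ℕ)‖ / (p : ℕ)) ^ 2, fun p => ?_⟩
    have h1 := hsq.le_tsum p (fun q _ => sq_nonneg _)
    have h2 : ‖g (p : ℕ) / ((p : ℕ) : ℂ)‖ = ‖g (p : ℕ)‖ / (p : ℕ) := by simp
    rw [h2]
    nlinarith [sq_nonneg (‖g (p : ℕ)‖ / (p : ℕ) - 1), sq_nonneg (‖g (p : ℕ)‖ / (p : ℕ))]
  obtain ⟨L1, hL1⟩ := conv_sum g κ hA
  obtain ⟨L2, hL2⟩ := pow_conv κ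
  obtain ⟨L3, hL3⟩ := prod_conv
    (fun p => Complex.exp (-(g p / p)) * (1 + g p / p + h p) - 1) (by
      refine Summable.of_nonneg_of_le (fun p => norm_nonneg _)
        (fun p => fac_bound _ _ M (hM p)) ?_
      refine Summable.add (Summable.mul_left _ ?_) (hh.mul_left _)
      refine hsq.congr fun p => ?_
      simp)
  refine ⟨_, ((((Complex.continuous_exp.tendsto _).comp hL1).mul hL2).mul hL3).congr fun N => ?_⟩
  simp only [Function.comp_apply]
  rw [Complex.exp_sum, ← Finset.prod_mul_distrib, ← Finset.prod_mul_distrib]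
  refine Finset.prod_congr rfl fun p hp => ?_
  rw [eulerFactor, hF p (Finset.mem_filter.1 hp).2]
  have e : Complex.exp ((g p - κ) / p) * Complex.exp (κ / p) * Complex.exp (-(g p / p)) = 1 := by
    rw [← Complex.exp_add, ← Complex.exp_add]
    have : (g p - κ) / (p : ℂ) + κ / p + -(g p / p) = 0 := by ring
    rw [this, Complex.exp_zero]
  linear_combination ((1 - 1 / (p : ℂ)) ^ κ * (1 + g p / p + h p)) * e
end
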